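/- arXiv:2103.12225 — 6 statements merged into one kernel-verified Lean document; each statement's English description precedes it below -/
import Mathlib

section
/- For every integer n ≥ 5, the achromatic arboricity of the complete graph K_n satisfies A_α(K_n) ≤ ⌊max over positive integers x of min{ n(n−1)/(2x), x(n−x−1)+1 }⌋. -/
/-- A partition of the edge set of `G` into `k` nonempty forests (acyclic classes)
such that the union of any two distinct parts contains a cycle. -/
def IsCompleteForestPartition {V : Type*} (G : SimpleGraph V) (k : ℕ)
    (P : Fin k → Set (Sym2 V)) : Prop :=
  (∀ i, (P i).Nonempty) ∧
  (∀ i j, i ≠ j → Disjoint (P i) (P j)) ∧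
  (⋃ i, P i) = G.edgeSet ∧
  (∀ i, (SimpleGraph.fromEdgeSet (P i)).IsAcyclic) ∧
  (∀ i j, i ≠ j → ¬ (SimpleGraph.fromEdgeSet (P i ∪ P j)).IsAcyclic)

/-- The achromatic arboricity of `G`: the largest number of parts in a partition of
`E(G)` into forests such that the union of any two parts contains a cycle. -/
noncomputable def achromaticArboricity {V : Type*} (G : SimpleGraph V) : ℕ :=
  sSup {k | ∃ P : Fin k → Set (Sym2 V), IsCompleteForestPartition G k P}

open Finset

/-- Size of a fibre. -/
noncomputable def fibSize {V Q : Type*} [Fintype V] (f : V → Q) (q : Q) : ℕ := by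
  classical exact #{z : V | f z = q}

/-- The weight of an ordered pair of vertices. -/
noncomputable def pairWeight {V Q : Type*} [Fintype V] (f : V → Q) (p : V × V) : ℤ := by
  classical exact (if f p.1 = f p.2 then 1 else 0) +
    (if fibSize f (f p.1) = 1 ∧ fibSize f (f p.2) = 1 then 0 else 1)

lemma pairWeight_nonneg {V Q : Type*} [Fintype V] (f : V → Q) (p : V × V) :
    0 ≤ pairWeight f p := by
  unfold pairWeight
  split_ifs <;> norm_num

lemma sq_sum_bound {Q : Type*} (N : Finset Q) (y : Q → ℤ)
    (hy : ∀ q ∈ N, 1 ≤ y q) :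
    ∑ q ∈ N, y q * y q ≤ ∑ q ∈ N, y q +
      (∑ q ∈ N, y q - #N + 1) * (∑ q ∈ N, y q - #N) := by
  classical
  have h1 : ∀ q ∈ N, y q ≤ ∑ q ∈ N, y q - #N + 1 := by
    intro q hq
    have h := Finset.single_le_sum (f := fun q => y q - 1) (s := N)
      (fun i hi => by have := hy i hi; simp; linarith) hq
    simp [Finset.sum_sub_distrib] at h
    linarith
  have h2 : ∑ q ∈ N, y q * (y q - 1) ≤
      ∑ q ∈ N, (∑ q ∈ N, y q - #N + 1) * (y q - 1) :=
    Finset.sum_le_sum fun q hq =>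
      mul_le_mul_of_nonneg_right (h1 q hq) (by have := hy q hq; linarith)
  rw [← Finset.mul_sum] at h2
  simp only [mul_sub, Finset.sum_sub_distrib, mul_one] at h2
  simp at h2
  linarith

lemma sum_pairWeight_le {V Q : Type*} [Fintype V] [DecidableEq V] [Fintype Q] (f : V → Q)
    (hf : Function.Surjective f) (x : ℕ) (hx : Fintype.card V ≤ Fintype.card Q + x)
    (hx2 : 2 * x + 1 ≤ Fintype.card V) :
    ∑ p ∈ (univ : Finset V).offDiag, pairWeight f p ≤
      4 * (x : ℤ) * ((Fintype.card V : ℤ) - x) := by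
  classical
  set n := Fintype.card V with hn
  set m := Fintype.card Q with hm
  have hfib : ∀ q, fibSize f q = #{z : V | f z = q} := fun q => by
    unfold fibSize; congr
  have hpos : ∀ q, 1 ≤ fibSize f q := by
    intro q
    obtain ⟨v, hv⟩ := hf q
    rw [hfib]
    exact Finset.card_pos.mpr ⟨v, by simp [hv]⟩
  have hsumt : ∑ q, (fibSize f q : ℤ) = n := by
    have := Finset.card_eq_sum_card_fiberwise (f := f) (s := (univ : Finset V)) (t := univ)
      (fun _ _ => by simp)
    rw [hn, ← Finset.card_univ, this]
    push_cast
    exact Finset.sum_congr rfl fun q _ => by rw [hfib]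
  set N : Finset Q := {q | fibSize f q ≠ 1} with hN
  set I : Finset V := {u | fibSize f (f u) = 1} with hI
  set y : Q → ℤ := fun q => (fibSize f q : ℤ) - 1 with hy
  have hyN : ∀ q ∈ N, 1 ≤ y q := by
    intro q hq
    have h1 := hpos q
    have h2 : fibSize f q ≠ 1 := by simpa [hN] using hq
    simp only [hy]; omega
  have hy0 : ∀ q, q ∉ N → y q = 0 := by
    intro q hq
    have h2 : fibSize f q = 1 := by simpa [hN] using hq
    simp [hy, h2]
  have hsumy : ∑ q ∈ N, y q = n - m := by
    rw [Finset.sum_subset (Finset.subset_univ N) (fun q _ hq => hy0 q hq)]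
    simp [hy, Finset.sum_sub_distrib, hsumt, hm]
  have hsumyy : ∑ q ∈ N, y q * y q = ∑ q, y q * y q := 
    Finset.sum_subset (Finset.subset_univ N) (fun q _ hq => by simp [hy0 q hq])
  have hbound := sq_sum_bound N y hyN
  have hcN : (#N : ℤ) ≤ ∑ q ∈ N, y q := by
    have := Finset.sum_le_sum hyN
    simpa using this
  -- isolated count
  have hIc : (#I : ℤ) = m - #N := by
    have h1 : #I = ∑ q : Q, #{z ∈ I | f z = q} :=
      Finset.card_eq_sum_card_fiberwise (fun _ _ => by simp)
    have h2 : ∀ q : Q, #{z ∈ I | f z = q} = if fibSize f q ≠ 1 then 0 else 1 := by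
      intro q
      split_ifs with h
      · rw [Finset.card_eq_zero, Finset.filter_eq_empty_iff]
        intro z hz hzq
        simp only [hI, Finset.mem_filter] at hz
        exact h (hzq ▸ hz.2)
      · push Not at h
        rw [← h, hfib]
        congr 1
        ext z
        simp only [hI, Finset.mem_filter, Finset.mem_univ, true_and]
        constructor
        · exact fun h => h.2
        · intro hz; exact ⟨by rw [hz, h], hz⟩
    have h3 : #N + #I = m := by
      rw [h1, Finset.sum_congr rfl (fun q _ => h2 q), hN, Finset.card_filter,
        ← Finset.sum_add_distrib, hm, ← Finset.card_univ, Finset.card_eq_sum_ones]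
      exact Finset.sum_congr rfl fun q _ => by split_ifs <;> rfl
    omega
  -- first part
  have hA : ∑ p ∈ (univ : Finset V).offDiag, (if f p.1 = f p.2 then (1:ℤ) else 0) =
      ∑ q, (fibSize f q : ℤ) * fibSize f q - n := by
    have h1 : ∑ p ∈ (univ : Finset V) ×ˢ univ, (if f p.1 = f p.2 then (1:ℤ) else 0) =
        ∑ q, (fibSize f q : ℤ) * fibSize f q := by
      rw [Finset.sum_product]
      have : ∀ u : V, ∑ v : V, (if f u = f v then (1:ℤ) else 0) = fibSize f (f u) := by
        intro u
        rw [Finset.sum_boole, hfib]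
        simp [eq_comm]
      simp only [this]
      rw [← Finset.sum_fiberwise (univ : Finset V) f]
      refine Finset.sum_congr rfl fun q _ => ?_
      rw [Finset.sum_congr rfl (g := fun _ => (fibSize f q : ℤ))]
      · rw [Finset.sum_const, hfib]; simp
      · intro u hu
        simp at hu
        simp [hu]
    rw [← h1, ← Finset.diag_union_offDiag, Finset.sum_union (Finset.disjoint_diag_offDiag _)]
    have h2 : ∑ p ∈ (univ : Finset V).diag, (if f p.1 = f p.2 then (1:ℤ) else 0) = n := by
      rw [Finset.sum_congr rfl (g := fun _ => (1 : ℤ))]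
      · simp [hn]
      · intro p hp
        rw [Finset.mem_diag] at hp
        simp [hp.2]
    rw [h2]; ring
  have hB : ∑ p ∈ (univ : Finset V).offDiag,
      (if fibSize f (f p.1) = 1 ∧ fibSize f (f p.2) = 1 then (0:ℤ) else 1) =
      n * (n - 1) - (#I : ℤ) * (#I - 1) := by
    have h1 : ∀ p : V × V, (if fibSize f (f p.1) = 1 ∧ fibSize f (f p.2) = 1 then (0:ℤ) else 1)
      = 1 - (if fibSize f (f p.1) = 1 ∧ fibSize f (f p.2) = 1 then (1:ℤ) else 0) := by
      intro p; split_ifs <;> rfl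
    simp only [h1, Finset.sum_sub_distrib]
    rw [Finset.sum_boole]
    have h2 : ((univ : Finset V).offDiag.filter
        fun p => fibSize f (f p.1) = 1 ∧ fibSize f (f p.2) = 1) = I.offDiag := by
      ext p
      simp [hI, Finset.mem_offDiag]
      tauto
    have h3 : ∀ s : Finset V, (#s.offDiag : ℤ) = #s * (#s - 1) := by
      intro s
      rw [Finset.offDiag_card, Nat.cast_sub (Nat.le_mul_self _)]
      push_cast; ring
    rw [h2, h3, ← Finset.cast_card, h3, Finset.card_univ]
  have hS : ∑ p ∈ (univ : Finset V).offDiag, pairWeight f p =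
      (∑ q, (fibSize f q : ℤ) * fibSize f q - n) + (n * (n - 1) - (#I : ℤ) * (#I - 1)) := by
    rw [← hA, ← hB, ← Finset.sum_add_distrib]
    refine Finset.sum_congr rfl fun p _ => ?_
    unfold pairWeight
    congr
  have hT : ∑ q, (fibSize f q : ℤ) * fibSize f q = ∑ q, y q * y q + 2 * n - m := by
    have : ∀ q, (fibSize f q : ℤ) * fibSize f q = y q * y q + 2 * fibSize f q - 1 := by
      intro q; simp only [hy]; ring
    simp only [this, Finset.sum_sub_distrib, Finset.sum_add_distrib, ← Finset.mul_sum, hsumt]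
    simp [hm]
  rw [hS, hT, hIc]
  rw [hsumyy, hsumy] at hbound
  rw [hsumy] at hcN
  have hc0 : (0:ℤ) ≤ #N := by positivity
  generalize (#N : ℤ) = c at *
  generalize ∑ q, y q * y q = S at *
  have hx' : (n : ℤ) ≤ m + x := by exact_mod_cast hx
  have hx2' : 2 * (x : ℤ) + 1 ≤ n := by exact_mod_cast hx2
  obtain ⟨z, hz⟩ : ∃ z : ℤ, z = n - m := ⟨_, rfl⟩
  have hm' : (m : ℤ) = n - z := by linarith
  rw [hm'] at *
  have e1 : 0 ≤ (z - c) * (n - 2 * z - 1) := mul_nonneg (by linarith) (by linarith)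
  have e2 : 0 ≤ ((x:ℤ) - z) * (n - x - z) := mul_nonneg (by linarith) (by linarith)
  nlinarith

/-- A finite graph has at least `n - |E|` components. -/
lemma card_le_comp_add {V : Type*} [Fintype V] [Nonempty V] (G : SimpleGraph V)
    [Fintype G.ConnectedComponent] :
    Fintype.card V ≤ Fintype.card G.ConnectedComponent + G.edgeSet.ncard := by
  classical
  obtain ⟨v0⟩ := (inferInstance : Nonempty V)
  let rep : G.ConnectedComponent → V := fun c => c.out
  have hrep : ∀ c, G.connectedComponentMk (rep c) = c := fun c => Quot.out_eq c
  set C0 := G.connectedComponentMk v0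
  let X : Finset (Sym2 V) := ((univ : Finset G.ConnectedComponent).erase C0).image
    (fun c => s(rep C0, rep c))
  let H : SimpleGraph V := SimpleGraph.fromEdgeSet (G.edgeSet ∪ X)
  have hGH : G ≤ H := by
    intro a b hab
    simp only [H, SimpleGraph.fromEdgeSet_adj]
    exact ⟨Or.inl hab, hab.ne⟩
  have hreach : ∀ v, H.Reachable (rep C0) v := by
    intro v
    have h1 : G.Reachable (rep (G.connectedComponentMk v)) v :=
      SimpleGraph.ConnectedComponent.exact (hrep _)
    refine SimpleGraph.Reachable.trans ?_ (h1.mono hGH)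
    by_cases hc : G.connectedComponentMk v = C0
    · rw [hc]
    · apply SimpleGraph.Adj.reachable
      simp only [H, SimpleGraph.fromEdgeSet_adj]
      refine ⟨Or.inr ?_, ?_⟩
      · simp only [X, Finset.coe_image]
        exact ⟨_, by simpa using hc, rfl⟩
      · intro h
        have := congrArg G.connectedComponentMk h
        rw [hrep, hrep] at this
        exact hc this.symm
  have hconn : H.Connected := by
    have : Nonempty V := ⟨v0⟩
    exact ⟨fun u v => (hreach u).symm.trans (hreach v)⟩
  have h1 := hconn.card_vert_le_card_edgeSet_add_one
  have h2 : H.edgeSet.ncard ≤ G.edgeSet.ncard + #X := by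
    calc H.edgeSet.ncard ≤ (G.edgeSet ∪ (X : Set (Sym2 V))).ncard := by
          apply Set.ncard_le_ncard _ (Set.toFinite _)
          simp only [H, SimpleGraph.edgeSet_fromEdgeSet]
          exact Set.sdiff_subset
      _ ≤ _ := by
          refine (Set.ncard_union_le _ _).trans ?_
          rw [Set.ncard_coe_finset]
  have h3 : #X ≤ Fintype.card G.ConnectedComponent - 1 := by
    refine Finset.card_image_le.trans ?_
    rw [Finset.card_erase_of_mem (Finset.mem_univ _), Finset.card_univ]
  have h4 : 0 < Fintype.card G.ConnectedComponent := Fintype.card_pos_iff.mpr ⟨C0⟩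
  rw [Nat.card_eq_fintype_card, Nat.card_coe_set_eq] at h1
  omega

/-- Walks in a vertex-disjoint union stay in one of the two graphs. -/
lemma walk_split {V : Type*} {F P : SimpleGraph V}
    (h : ∀ a b c, F.Adj a b → ¬ P.Adj a c) {u v : V} (p : (F ⊔ P).Walk u v) :
    ((∃ z, F.Adj u z) → ∀ e ∈ p.edges, e ∈ F.edgeSet) ∧
    ((¬ ∃ z, F.Adj u z) → ∀ e ∈ p.edges, e ∈ P.edgeSet) := by
  induction p with
  | nil => simp
  | @cons u v w huv p ih =>
    constructor
    · rintro ⟨z, hz⟩ e he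
      have hF : F.Adj u v := by
        rcases huv with h1 | h1
        · exact h1
        · exact absurd h1 (h _ _ _ hz)
      rw [SimpleGraph.Walk.edges_cons, List.mem_cons] at he
      rcases he with rfl | he
      · exact hF
      · exact ih.1 ⟨u, hF.symm⟩ e he
    · intro hno e he
      have hP : P.Adj u v := by
        rcases huv with h1 | h1
        · exact absurd ⟨_, h1⟩ hno
        · exact h1
      rw [SimpleGraph.Walk.edges_cons, List.mem_cons] at he
      rcases he with rfl | he
      · exact hP
      · exact ih.2 (fun ⟨z, hz⟩ => h _ _ _ hz hP.symm) e he

lemma acyclic_sup_disjoint {V : Type*} {F P : SimpleGraph V}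
    (h : ∀ a b c, F.Adj a b → ¬ P.Adj a c) (hF : F.IsAcyclic) (hP : P.IsAcyclic) :
    (F ⊔ P).IsAcyclic := by
  intro u p hp
  by_cases hu : ∃ z, F.Adj u z
  · exact hF _ (hp.transfer ((walk_split h p).1 hu))
  · exact hP _ (hp.transfer ((walk_split h p).2 hu))

lemma reachable_sup_disjoint {V : Type*} {F P : SimpleGraph V}
    (h : ∀ a b c, F.Adj a b → ¬ P.Adj a c) {u v : V} (hr : (F ⊔ P).Reachable u v) :
    F.Reachable u v ∨ P.Reachable u v := by
  obtain ⟨p⟩ := hr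
  by_cases hu : ∃ z, F.Adj u z
  · exact Or.inl ⟨p.transfer _ ((walk_split h p).1 hu)⟩
  · exact Or.inr ⟨p.transfer _ ((walk_split h p).2 hu)⟩

/-- The key structural lemma. -/
lemma key_cycle {V : Type*} {F P : SimpleGraph V} (hF : F.IsAcyclic) (hP : P.IsAcyclic)
    (hFP : ¬ (F ⊔ P).IsAcyclic) :
    (∃ a b, P.Adj a b ∧ F.Reachable a b) ∨
    (∃ a b c d, P.Adj a b ∧ P.Adj c d ∧ s(a, b) ≠ s(c, d) ∧
      (∃ z, F.Adj a z) ∧ (∃ z, F.Adj c z)) := by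
  by_contra hcon
  push Not at hcon
  obtain ⟨h1, h2⟩ := hcon
  by_cases hA : ∀ a b c, F.Adj a b → ¬ P.Adj a c
  · exact hFP (acyclic_sup_disjoint hA hF hP)
  push Not at hA
  obtain ⟨a, z, b, haz, hab⟩ := hA
  set P0 := P.deleteEdges {s(a, b)} with hP0
  have hP0le : P0 ≤ P := SimpleGraph.deleteEdges_le _
  have hdis : ∀ c d e, F.Adj c d → ¬ P0.Adj c e := by
    intro c d e hcd hce
    rw [hP0, SimpleGraph.deleteEdges_adj] at hce
    exact h2 a b c e hab hce.1 (fun h => hce.2 (by simp [h])) ⟨z, haz⟩ d hcd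
  have hac := acyclic_sup_disjoint hdis hF (hP.anti hP0le)
  have hnr : ¬ (F ⊔ P0).Reachable a b := by
    intro hr
    rcases reachable_sup_disjoint hdis hr with h | h
    · exact h1 a b hab h
    · have := SimpleGraph.isAcyclic_iff_forall_isBridge.mp hP (e := s(a, b)) hab
      exact this h
  refine hFP ((hac.sup_edge_of_not_reachable hnr).anti ?_)
  intro c d hcd
  rcases hcd with h | h
  · exact Or.inl (Or.inl h)
  · by_cases hh : s(c, d) = s(a, b)
    · right
      rw [SimpleGraph.edge_adj]
      refine ⟨?_, h.ne⟩
      rw [Sym2.eq_iff] at hh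
      tauto
    · exact Or.inl (Or.inr (by rw [hP0, SimpleGraph.deleteEdges_adj]; exact ⟨h, by simpa using hh⟩))

/-- The ordered pairs of an edge set. -/
noncomputable def ordPairs {V : Type*} [Fintype V] (P : Set (Sym2 V)) : Finset (V × V) := by
  classical exact {p : V × V | s(p.1, p.2) ∈ P}

lemma mem_ordPairs {V : Type*} [Fintype V] (P : Set (Sym2 V)) (p : V × V) :
    p ∈ ordPairs P ↔ s(p.1, p.2) ∈ P := by
  unfold ordPairs; simp

lemma card_ordPairs {V : Type*} [Fintype V] (P : Set (Sym2 V))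
    (hd : ∀ a b, s(a, b) ∈ P → a ≠ b) : #(ordPairs P) = 2 * P.ncard := by
  classical
  have hfin : P.Finite := Set.toFinite _
  rw [Set.ncard_eq_toFinset_card P hfin]
  rw [Finset.card_eq_sum_card_fiberwise (f := fun p : V × V => s(p.1, p.2))
    (t := hfin.toFinset) (fun p hp => by
      have := (mem_ordPairs P p).mp hp
      simpa using this)]
  rw [Finset.sum_congr rfl (g := fun _ => 2)]
  · simp [mul_comm]
  · intro e he
    induction e with
    | h a b =>
    have he' : s(a, b) ∈ P := by simpa using he
    have : ({p ∈ ordPairs P | s(p.1, p.2) = s(a, b)} : Finset (V × V)) = {(a, b), (b, a)} := by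
      ext ⟨c, d⟩
      simp only [Finset.mem_filter, mem_ordPairs, Finset.mem_insert, Finset.mem_singleton,
        Prod.mk.injEq, Sym2.eq_iff]
      constructor
      · exact fun h => h.2
      · rintro (⟨rfl, rfl⟩ | ⟨rfl, rfl⟩)
        · exact ⟨he', by simp⟩
        · exact ⟨Sym2.eq_swap ▸ he', by simp⟩
    rw [this]
    exact Finset.card_pair (fun h => hd a b he' (Prod.mk.inj h).1)

lemma fibSize_ne_one {V Q : Type*} [Fintype V] (f : V → Q) {u v : V} (huv : u ≠ v)
    (h : f u = f v) : fibSize f (f u) ≠ 1 := by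
  classical
  unfold fibSize
  intro h1
  rw [Finset.card_eq_one] at h1
  obtain ⟨a, ha⟩ := h1
  have hu : u ∈ ({a} : Finset V) := by rw [← ha]; simp
  have hv : v ∈ ({a} : Finset V) := by rw [← ha]; simp [h]
  simp at hu hv
  exact huv (hu.trans hv.symm)

lemma pairWeight_two {V Q : Type*} [Fintype V] (f : V → Q) {u v : V} (huv : u ≠ v)
    (h : f u = f v) : pairWeight f (u, v) = 2 := by
  have := fibSize_ne_one f huv h
  unfold pairWeight
  simp [h] at this ⊢
  simp [this]

lemma pairWeight_one {V Q : Type*} [Fintype V] (f : V → Q) {u v : V}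
    (h : fibSize f (f u) ≠ 1) : 1 ≤ pairWeight f (u, v) ∧ 1 ≤ pairWeight f (v, u) := by
  unfold pairWeight
  simp [h]
  constructor <;> split_ifs <;> norm_num

lemma weight_ge_four {V : Type*} [Fintype V] (F : Set (Sym2 V)) (P : Set (Sym2 V))
    (hF : (SimpleGraph.fromEdgeSet F).IsAcyclic) (hP : (SimpleGraph.fromEdgeSet P).IsAcyclic)
    (hFP : ¬ (SimpleGraph.fromEdgeSet (F ∪ P)).IsAcyclic) :
    4 ≤ ∑ p ∈ ordPairs P,
      pairWeight (SimpleGraph.fromEdgeSet F).connectedComponentMk p := by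
  classical
  set f := (SimpleGraph.fromEdgeSet F).connectedComponentMk with hf
  rw [SimpleGraph.fromEdgeSet_union] at hFP
  rcases key_cycle hF hP hFP with ⟨a, b, hab, hr⟩ | ⟨a, b, c, d, hab, hcd, hne, ⟨z, hz⟩, ⟨t, ht⟩⟩
  · have hfe : f a = f b := SimpleGraph.ConnectedComponent.sound hr
    have hn := hab.ne
    rw [SimpleGraph.fromEdgeSet_adj] at hab
    have hsub : ({(a, b), (b, a)} : Finset (V × V)) ⊆ ordPairs P := by
      intro p hp
      simp only [Finset.mem_insert, Finset.mem_singleton] at hp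
      rw [mem_ordPairs]
      rcases hp with rfl | rfl
      · exact hab.1
      · exact Sym2.eq_swap ▸ hab.1
    refine le_trans ?_ (Finset.sum_le_sum_of_subset_of_nonneg hsub
      (fun p _ _ => pairWeight_nonneg f p))
    rw [Finset.sum_pair (fun h => hn (Prod.mk.inj h).1), pairWeight_two f hn hfe,
      pairWeight_two f hn.symm hfe.symm]
    norm_num
  · have h1 := fibSize_ne_one f hz.ne (SimpleGraph.ConnectedComponent.sound hz.reachable)
    have h2 := fibSize_ne_one f ht.ne (SimpleGraph.ConnectedComponent.sound ht.reachable)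
    have hn := hab.ne
    have hn2 := hcd.ne
    rw [SimpleGraph.fromEdgeSet_adj] at hab hcd
    have hsub : ({(a, b), (b, a), (c, d), (d, c)} : Finset (V × V)) ⊆ ordPairs P := by
      intro p hp
      simp only [Finset.mem_insert, Finset.mem_singleton] at hp
      rw [mem_ordPairs]
      rcases hp with rfl | rfl | rfl | rfl
      · exact hab.1
      · exact Sym2.eq_swap ▸ hab.1
      · exact hcd.1
      · exact Sym2.eq_swap ▸ hcd.1
    refine le_trans ?_ (Finset.sum_le_sum_of_subset_of_nonneg hsub
      (fun p _ _ => pairWeight_nonneg f p))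
    have w1 := pairWeight_one f (v := b) h1
    have w2 := pairWeight_one f (v := d) h2
    rw [Ne, Sym2.eq_iff] at hne
    rw [Finset.sum_insert (by simp; grind), Finset.sum_insert (by simp; grind),
      Finset.sum_pair (by simp; grind)]
    linarith [w1.1, w1.2, w2.1, w2.2]

/-- The combinatorial core. -/
lemma core (n k : ℕ) (hk : 0 < k) (hn : 5 ≤ n) (P : Fin k → Set (Sym2 (Fin n)))
    (hP : IsCompleteForestPartition (⊤ : SimpleGraph (Fin n)) k P) :
    ∃ x : ℕ, 0 < x ∧ 2 * x * k ≤ n * (n - 1) ∧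
      (2 * x + 1 ≤ n → (k : ℤ) ≤ x * ((n : ℤ) - x - 1) + 1) := by
  classical
  obtain ⟨hne, hdis, hun, hac, hcyc⟩ := hP
  have hd : ∀ i a b, s(a, b) ∈ P i → a ≠ b := by
    intro i a b h
    have : s(a, b) ∈ (⊤ : SimpleGraph (Fin n)).edgeSet := by
      rw [← hun]; exact Set.mem_iUnion.mpr ⟨i, h⟩
    exact ((SimpleGraph.mem_edgeSet _).mp this).ne
  have hdisj : Set.PairwiseDisjoint (↑(univ : Finset (Fin k))) (fun i => ordPairs (P i)) := by
    intro i _ j _ hij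
    rw [Function.onFun, Finset.disjoint_left]
    intro p hp hq
    rw [mem_ordPairs] at hp hq
    exact Set.disjoint_left.mp (hdis i j hij) hp hq
  have hsub : (univ : Finset (Fin k)).biUnion (fun i => ordPairs (P i)) ⊆
      (univ : Finset (Fin n)).offDiag := by
    intro p hp
    simp only [Finset.mem_biUnion, mem_ordPairs] at hp
    obtain ⟨i, _, hi⟩ := hp
    simp only [Finset.mem_offDiag, Finset.mem_univ, true_and]
    exact hd i _ _ hi
  obtain ⟨i0, -, hmin⟩ := Finset.exists_min_image (univ : Finset (Fin k))
    (fun i => (P i).ncard) ⟨⟨0, hk⟩, Finset.mem_univ _⟩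
  refine ⟨(P i0).ncard, (Set.ncard_pos (Set.toFinite _)).mpr (hne i0), ?_, ?_⟩
  · have h1 := Finset.card_le_card hsub
    rw [Finset.card_biUnion (fun i hi j hj hij => hdisj hi hj hij), Finset.offDiag_card] at h1
    have h2 : ∑ _i : Fin k, 2 * (P i0).ncard ≤ ∑ i : Fin k, #(ordPairs (P i)) := by
      refine Finset.sum_le_sum fun i hi => ?_
      rw [card_ordPairs _ (hd i)]
      exact Nat.mul_le_mul_left _ (hmin i hi)
    simp only [Finset.sum_const, Finset.card_univ, Fintype.card_fin, smul_eq_mul] at h2 h1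
    rw [Nat.mul_sub_one]
    calc 2 * (P i0).ncard * k = k * (2 * (P i0).ncard) := by ring
      _ ≤ _ := h2.trans h1
  · intro hx
    set x := (P i0).ncard with hxdef
    set F := SimpleGraph.fromEdgeSet (P i0) with hF
    have : Nonempty (Fin n) := ⟨⟨0, by omega⟩⟩
    have hedge : F.edgeSet = P i0 := by
      rw [hF, SimpleGraph.edgeSet_fromEdgeSet]
      ext e
      induction e with
      | h a b =>
      simp only [Set.mem_sdiff, Sym2.mem_diagSet, Sym2.mk_isDiag_iff]
      exact ⟨fun h => h.1, fun h => ⟨h, hd _ _ _ h⟩⟩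
    have hcomp := card_le_comp_add F
    rw [hedge, ← hxdef] at hcomp
    have hW := sum_pairWeight_le F.connectedComponentMk Quot.mk_surjective x hcomp
      (by simpa using hx)
    have h1 := Finset.sum_le_sum_of_subset_of_nonneg hsub
      (fun p _ _ => pairWeight_nonneg F.connectedComponentMk p)
    rw [Finset.sum_biUnion hdisj] at h1
    rw [← Finset.add_sum_erase _ _ (Finset.mem_univ i0)] at h1
    have h2 : ∑ p ∈ ordPairs (P i0), pairWeight F.connectedComponentMk p = 4 * x := by
      rw [Finset.sum_congr rfl (g := fun _ => (2 : ℤ))]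
      · rw [Finset.sum_const, card_ordPairs _ (hd i0), ← hxdef]
        simp; ring
      · rintro ⟨a, b⟩ hp
        rw [mem_ordPairs] at hp
        have hab : F.Adj a b := by
          rw [hF, SimpleGraph.fromEdgeSet_adj]; exact ⟨hp, hd _ _ _ hp⟩
        exact pairWeight_two _ hab.ne (SimpleGraph.ConnectedComponent.sound hab.reachable)
    have h3 : ∑ _j ∈ (univ : Finset (Fin k)).erase i0, (4 : ℤ) ≤
        ∑ j ∈ (univ : Finset (Fin k)).erase i0,
          ∑ p ∈ ordPairs (P j), pairWeight F.connectedComponentMk p := by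
      refine Finset.sum_le_sum fun j hj => ?_
      exact weight_ge_four _ _ (hac i0) (hac j) (hcyc i0 j (Finset.ne_of_mem_erase hj).symm)
    rw [Finset.sum_const, Finset.card_erase_of_mem (Finset.mem_univ _), Finset.card_univ,
      Fintype.card_fin, nsmul_eq_mul, Nat.cast_sub hk] at h3
    rw [Fintype.card_fin] at hW
    push_cast at h3
    nlinarith

/-- For `n ≥ 5`, the achromatic arboricity of `K_n` is at most the
floor of the maximum over positive integers `x` of `min{n(n−1)/(2x), x(n−x−1)+1}`. -/
theorem achromaticArboricity_le_floor_max_min (n : ℕ) (hn : 5 ≤ n) :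
    (achromaticArboricity (⊤ : SimpleGraph (Fin n)) : ℝ) ≤
      (⌊sSup {y : ℝ | ∃ x : ℕ, 0 < x ∧
        y = min ((n * (n - 1) : ℝ) / (2 * x)) ((x : ℝ) * ((n : ℝ) - x - 1) + 1)}⌋ : ℝ) := by
  set S := {y : ℝ | ∃ x : ℕ, 0 < x ∧
        y = min ((n * (n - 1) : ℝ) / (2 * x)) ((x : ℝ) * ((n : ℝ) - x - 1) + 1)} with hS
  have hn' : (5 : ℝ) ≤ n := by exact_mod_cast hn
  have hnn : (0 : ℝ) ≤ n * (n - 1) := mul_nonneg (by linarith) (by linarith)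
  have hbdd : BddAbove S := by
    refine ⟨(n * (n - 1) : ℝ), ?_⟩
    rintro y ⟨x, hx, rfl⟩
    refine (min_le_left _ _).trans (div_le_self hnn ?_)
    have : (1 : ℝ) ≤ x := by exact_mod_cast hx
    linarith
  have hone : (n : ℝ) - 1 ≤ sSup S := by
    refine le_csSup_of_le hbdd ⟨1, one_pos, rfl⟩ ?_
    refine le_min ?_ ?_
    · rw [le_div_iff₀ (by norm_num)]
      push_cast; nlinarith
    · push_cast; linarith
  have hall : ∀ k ∈ {k | ∃ P : Fin k → Set (Sym2 (Fin n)),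
      IsCompleteForestPartition (⊤ : SimpleGraph (Fin n)) k P}, (k : ℝ) ≤ sSup S := by
    rintro k ⟨P, hP⟩
    rcases Nat.eq_zero_or_pos k with rfl | hk
    · push_cast; linarith
    obtain ⟨x, hx, h1, h2⟩ := core n k hk hn P hP
    have hx' : (0 : ℝ) < x := by exact_mod_cast hx
    have h1' : 2 * (x : ℝ) * k ≤ n * (n - 1) := by
      have : ((2 * x * k : ℕ) : ℝ) ≤ ((n * (n - 1) : ℕ) : ℝ) := by exact_mod_cast h1
      rw [Nat.cast_mul n, Nat.cast_sub (by omega)] at this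
      push_cast at this
      exact this
    by_cases hxn : 2 * x + 1 ≤ n
    · refine le_csSup_of_le hbdd ⟨x, hx, rfl⟩ (le_min ?_ ?_)
      · rw [le_div_iff₀ (by linarith)]; linarith
      · exact_mod_cast h2 hxn
    · refine le_trans ?_ hone
      have h3 : (n : ℝ) ≤ 2 * x := by
        have : n ≤ 2 * x := by omega
        exact_mod_cast this
      have hk0 : (0 : ℝ) ≤ k := by positivity
      have h4 : (n : ℝ) * k ≤ n * (n - 1) := (mul_le_mul_of_nonneg_right h3 hk0).trans h1'
      exact le_of_mul_le_mul_left h4 (by linarith)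
  have hfl0 : 0 ≤ ⌊sSup S⌋ := Int.floor_nonneg.mpr (by linarith)
  have hmain : achromaticArboricity (⊤ : SimpleGraph (Fin n)) ≤ ⌊sSup S⌋.toNat := by
    unfold achromaticArboricity
    refine csSup_le' ?_
    intro k hk
    have : (k : ℤ) ≤ ⌊sSup S⌋ := Int.le_floor.mpr (by exact_mod_cast hall k hk)
    omega
  have : (achromaticArboricity (⊤ : SimpleGraph (Fin n)) : ℤ) ≤ ⌊sSup S⌋ := by omega
  exact_mod_cast this
end

section
/- If q is an odd prime and n = q² + q + 1, then the achromatic arboricity of K_n satisfies A_α(K_n) ≥ ((q+1)/4)·(n+1). -/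
theorem card_le_of_reachable {V : Type*} [Fintype V] (G : SimpleGraph V)
    (S : Set V) (h : ∀ u ∈ S, ∀ v ∈ S, G.Reachable u v) (hS : S.Nonempty) :
    S.ncard ≤ G.edgeSet.ncard + 1 := by
  classical
  obtain ⟨a, ha⟩ := hS
  let C := G.connectedComponentMk a
  have h1 := C.connected_toSimpleGraph.card_vert_le_card_edgeSet_add_one
  have h2 : S ⊆ C.supp := by
    intro u hu
    exact SimpleGraph.ConnectedComponent.sound (h u hu a ha)
  have h3 : S.ncard ≤ Nat.card C := by
    have := Set.ncard_le_ncard h2 (Set.toFinite _)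
    exact this
  have h4 : Nat.card C.toSimpleGraph.edgeSet ≤ G.edgeSet.ncard := by
    let f := C.toSimpleGraph_hom.mapEdgeSet
    have hf : Function.Injective f := by
      apply SimpleGraph.Hom.mapEdgeSet.injective
      exact Subtype.val_injective
    exact Nat.card_le_card_of_injective f hf
  omega

theorem acyclic_of_card {V : Type*} [Fintype V] (G : SimpleGraph V)
    (S : Set V) (h : ∀ u ∈ S, ∀ v ∈ S, G.Reachable u v) (hS : S.Nonempty)
    (hc : G.edgeSet.ncard + 1 ≤ S.ncard) : G.IsAcyclic := by
  classical
  rw [SimpleGraph.isAcyclic_iff_forall_adj_isBridge]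
  intro u v huv
  rw [SimpleGraph.isBridge_iff]
  intro hr
  have key : ∀ a b, G.Reachable a b → (G.deleteEdges {s(u, v)}).Reachable a b := by
    rintro a b ⟨w⟩
    induction w with
    | nil => exact SimpleGraph.Reachable.refl _
    | @cons x y z hxy w ih =>
      refine SimpleGraph.Reachable.trans ?_ ih
      by_cases he : s(x, y) = s(u, v)
      · rw [Sym2.eq_iff] at he
        rcases he with ⟨rfl, rfl⟩ | ⟨rfl, rfl⟩
        · exact hr
        · exact hr.symm
      · apply SimpleGraph.Adj.reachable
        rw [SimpleGraph.deleteEdges_adj]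
        exact ⟨hxy, he⟩
  have h1 := card_le_of_reachable (G.deleteEdges {s(u, v)}) S
    (fun a ha b hb => key a b (h a ha b hb)) hS
  have h2 : (G.deleteEdges {s(u, v)}).edgeSet.ncard < G.edgeSet.ncard := by
    apply Set.ncard_lt_ncard _ (Set.toFinite _)
    rw [SimpleGraph.edgeSet_deleteEdges]
    refine ⟨Set.sdiff_subset, fun hh => ?_⟩
    exact (hh huv).2 rfl
  omega

theorem not_acyclic_union {V : Type*} (A B : Set (Sym2 V)) (hAB : Disjoint A B) (u v : V)
    (huv : u ≠ v) (hA : (SimpleGraph.fromEdgeSet A).Reachable u v)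
    (hB : (SimpleGraph.fromEdgeSet B).Reachable u v) :
    ¬ (SimpleGraph.fromEdgeSet (A ∪ B)).IsAcyclic := by
  classical
  intro hac
  obtain ⟨p, hp⟩ := hA.exists_isPath
  obtain ⟨r, hr⟩ := hB.exists_isPath
  have lA : SimpleGraph.fromEdgeSet A ≤ SimpleGraph.fromEdgeSet (A ∪ B) :=
    SimpleGraph.fromEdgeSet_mono Set.subset_union_left
  have lB : SimpleGraph.fromEdgeSet B ≤ SimpleGraph.fromEdgeSet (A ∪ B) :=
    SimpleGraph.fromEdgeSet_mono Set.subset_union_right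
  have h := (hac.subsingleton_path u v).elim ⟨p.mapLe lA, hp.mapLe lA⟩ ⟨r.mapLe lB, hr.mapLe lB⟩
  have h' := congrArg (fun w : (SimpleGraph.fromEdgeSet (A ∪ B)).Path u v => w.1.edges) h
  simp only [SimpleGraph.Walk.edges_mapLe_eq_edges] at h'
  cases p with
  | nil => exact huv rfl
  | @cons _ y _ hxy w =>
    have h1 : s(u, y) ∈ r.edges := by
      rw [← h']; simp
    have h2 := r.edges_subset_edgeSet h1
    rw [SimpleGraph.edgeSet_fromEdgeSet] at h2
    rw [SimpleGraph.fromEdgeSet_adj] at hxy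
    exact Set.disjoint_left.1 hAB hxy.1 h2.1

/-- The zigzag classes are connected. -/
theorem zigzag_reachable {V : Type*} (m : ℕ) [NeZero (2 * m)] (G : SimpleGraph V)
    (f : ZMod (2 * m) → V) (i : ℕ) (hi : i < m)
    (hG : ∀ a b : ZMod (2 * m), a ≠ b → (a + b).val / 2 = i → G.Adj (f a) (f b))
    (a b : ZMod (2 * m)) : G.Reachable (f a) (f b) := by
  have hr : ∀ a b : ZMod (2 * m), (a + b).val / 2 = i → G.Reachable (f a) (f b) := by
    intro a b hab
    by_cases h : a = b
    · rw [h]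
    · exact (hG a b h hab).reachable
  have v0 : ((2 * i : ℕ) : ZMod (2 * m)).val = 2 * i := ZMod.val_cast_of_lt (by omega)
  have v1 : ((2 * i + 1 : ℕ) : ZMod (2 * m)).val = 2 * i + 1 := ZMod.val_cast_of_lt (by omega)
  have step : ∀ a : ZMod (2 * m), G.Reachable (f a) (f (a + 1)) := by
    intro a
    refine (hr a (((2 * i : ℕ) : ZMod (2 * m)) - a) ?_).trans (hr _ _ ?_)
    · rw [add_sub_cancel, v0]; omega
    · have : ((2 * i : ℕ) : ZMod (2 * m)) - a + (a + 1) = ((2 * i + 1 : ℕ) : ZMod (2 * m)) := by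
        push_cast; ring
      rw [this, v1]; omega
  have steps : ∀ k : ℕ, G.Reachable (f a) (f (a + k)) := by
    intro k
    induction k with
    | zero => simp
    | succ k ih =>
      refine ih.trans ?_
      have := step (a + k)
      push_cast
      rwa [← add_assoc]
  have := steps (b - a).val
  rwa [ZMod.natCast_zmod_val, add_sub_cancel] at this

/-- A finite projective plane of order `2 * m - 1` with an involution on the lines whose
orbits have distinct intersection points. -/
structure PairedPlane (V L : Type) [Fintype V] [Fintype L] [DecidableEq L] (m : ℕ) where
  inc : V → L → Prop
  line : ∀ u v : V, u ≠ v → ∃ l, inc u l ∧ inc v l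
  uniq : ∀ u v l k, u ≠ v → inc u l → inc v l → inc u k → inc v k → l = k
  meet : ∀ l k : L, ∃ p, inc p l ∧ inc p k
  pts : L → ZMod (2 * m) → V
  pts_inj : ∀ l, Function.Injective (pts l)
  pts_inc : ∀ l v, inc v l ↔ ∃ a, pts l a = v
  inv : L → L
  inv_inv : ∀ l, inv (inv l) = l
  l0 : L
  inv_l0 : inv l0 = l0
  fix : ∀ l, inv l = l → l = l0
  hA : ∀ p l, inc p l → inc p (inv l) → inc p l0 → l = l0
  hB : ∀ p l k, l ≠ l0 → inc p l → inc p (inv l) → inc p k → inc p (inv k) →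
    k = l ∨ k = inv l

namespace PairedPlane

variable {V L : Type} [Fintype V] [Fintype L] [DecidableEq L] {m : ℕ} (D : PairedPlane V L m)

/-- Orbit of a line. -/
def orb (l : L) : Finset L := {l, D.inv l}

theorem orb_eq_iff (l k : L) : D.orb k = D.orb l ↔ k ∈ D.orb l := by
  unfold orb
  constructor
  · intro h; rw [← h]; simp
  · intro h
    rw [Finset.mem_insert, Finset.mem_singleton] at h
    rcases h with rfl | rfl
    · rfl
    · rw [D.inv_inv, Finset.pair_comm]

theorem orb_inv (l : L) : D.orb (D.inv l) = D.orb l := by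
  rw [orb_eq_iff]; simp [orb]

/-- Set of orbits. -/
def orbs : Finset (Finset L) := Finset.univ.image D.orb

theorem mem_orbs {o : Finset L} (ho : o ∈ D.orbs) : ∃ l, D.orb l = o := by
  simpa [orbs] using ho

theorem sum_orbs : ∑ o ∈ D.orbs, o.card = Fintype.card L := by
  rw [← Finset.card_univ, Finset.card_eq_sum_card_image D.orb Finset.univ]
  apply Finset.sum_congr rfl
  intro o ho
  obtain ⟨l, rfl⟩ := D.mem_orbs ho
  congr 1
  ext k
  simp [orb_eq_iff]

theorem card_orbs : Fintype.card L + 1 ≤ 2 * D.orbs.card := by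
  have h0 : D.orb D.l0 ∈ D.orbs := by simp [orbs]
  have h1 := D.sum_orbs
  rw [← Finset.add_sum_erase _ _ h0] at h1
  have h2 : (D.orb D.l0).card = 1 := by simp [orb, D.inv_l0]
  have h3 : ∑ o ∈ D.orbs.erase (D.orb D.l0), o.card ≤ (D.orbs.erase (D.orb D.l0)).card • 2 := by
    apply Finset.sum_le_card_nsmul
    intro o ho
    obtain ⟨l, rfl⟩ := D.mem_orbs (Finset.mem_of_mem_erase ho)
    exact Finset.card_le_two
  rw [Finset.card_erase_of_mem h0] at h3
  have : 0 < D.orbs.card := Finset.card_pos.2 ⟨_, h0⟩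
  simp at h3
  omega

/-- Points covered by an orbit. -/
def cover (o : Finset L) : Set V := {v | ∃ l, D.orb l = o ∧ D.inc v l}

/-- The parts of the partition. -/
def part (o : Finset L) (i : ℕ) : Set (Sym2 V) :=
  {e | ∃ l a b, a ≠ b ∧ D.orb l = o ∧ e = s(D.pts l a, D.pts l b) ∧ (a + b).val / 2 = i}

theorem inc_pts (l : L) (a) : D.inc (D.pts l a) l := (D.pts_inc _ _).2 ⟨a, rfl⟩

theorem part_disjoint (o o' : Finset L) (i i' : ℕ) (h : ¬ (o = o' ∧ i = i')) :
    Disjoint (D.part o i) (D.part o' i') := by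
  rw [Set.disjoint_left]
  rintro e ⟨l, a, b, hab, rfl, rfl, rfl⟩ ⟨l', a', b', hab', rfl, he, rfl⟩
  have hne : D.pts l a ≠ D.pts l b := fun hh => hab (D.pts_inj l hh)
  have hl : l = l' := by
    apply D.uniq _ _ _ _ hne (D.inc_pts _ _) (D.inc_pts _ _)
    · rw [Sym2.eq_iff] at he
      rcases he with ⟨h1, h2⟩ | ⟨h1, h2⟩ <;> rw [h1] <;> exact D.inc_pts _ _
    · rw [Sym2.eq_iff] at he
      rcases he with ⟨h1, h2⟩ | ⟨h1, h2⟩ <;> rw [h2] <;> exact D.inc_pts _ _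
  subst hl
  apply h
  refine ⟨rfl, ?_⟩
  rw [Sym2.eq_iff] at he
  rcases he with ⟨h1, h2⟩ | ⟨h1, h2⟩
  · rw [D.pts_inj _ h1, D.pts_inj _ h2]
  · rw [D.pts_inj _ h1, D.pts_inj _ h2, add_comm]

theorem part_edge (o : Finset L) (i : ℕ) (e : Sym2 V) (he : e ∈ D.part o i) :
    e ∈ (⊤ : SimpleGraph V).edgeSet := by
  obtain ⟨l, a, b, hab, rfl, rfl, rfl⟩ := he
  simpa using fun hh => hab (D.pts_inj l hh)

theorem edge_part (hm : 0 < m) (e : Sym2 V) (he : e ∈ (⊤ : SimpleGraph V).edgeSet) :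
    ∃ o ∈ D.orbs, ∃ i < m, e ∈ D.part o i := by
  induction e with
  | h u v =>
    have huv : u ≠ v := by simpa using he
    obtain ⟨l, h1, h2⟩ := D.line u v huv
    rw [D.pts_inc] at h1 h2
    obtain ⟨a, rfl⟩ := h1
    obtain ⟨b, rfl⟩ := h2
    refine ⟨D.orb l, by simp [orbs], (a + b).val / 2, ?_, l, a, b, ?_, rfl, rfl, rfl⟩
    · have : NeZero (2 * m) := ⟨by omega⟩
      have := ZMod.val_lt (a + b)
      omega
    · rintro rfl; exact huv rfl

theorem edgeSet_part (o : Finset L) (i : ℕ) :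
    (SimpleGraph.fromEdgeSet (D.part o i)).edgeSet = D.part o i := by
  rw [SimpleGraph.edgeSet_fromEdgeSet]
  ext e
  constructor
  · exact fun h => h.1
  · intro h
    refine ⟨h, ?_⟩
    have := D.part_edge o i e h
    exact SimpleGraph.not_isDiag_of_mem_edgeSet _ this

theorem line_reach (hm : 0 < m) (o : Finset L) (i : ℕ) (hi : i < m) (l : L) (hl : D.orb l = o)
    (u v : V) (hu : D.inc u l) (hv : D.inc v l) :
    (SimpleGraph.fromEdgeSet (D.part o i)).Reachable u v := by
  rw [D.pts_inc] at hu hv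
  obtain ⟨a, rfl⟩ := hu
  obtain ⟨b, rfl⟩ := hv
  have : NeZero (2 * m) := ⟨by omega⟩
  apply zigzag_reachable m _ (D.pts l) i hi
  intro a b hab h
  rw [SimpleGraph.fromEdgeSet_adj]
  exact ⟨⟨l, a, b, hab, hl, rfl, h⟩, fun hh => hab (D.pts_inj l hh)⟩

theorem cover_reach (hm : 0 < m) (o : Finset L) (i : ℕ) (hi : i < m)
    (u : V) (hu : u ∈ D.cover o) (v : V) (hv : v ∈ D.cover o) :
    (SimpleGraph.fromEdgeSet (D.part o i)).Reachable u v := by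
  obtain ⟨l, hl, hul⟩ := hu
  obtain ⟨k, hk, hvk⟩ := hv
  obtain ⟨p, hpl, hpk⟩ := D.meet l k
  exact (D.line_reach hm o i hi l hl u p hul hpl).trans (D.line_reach hm o i hi k hk p v hpk hvk)

theorem line_ncard (_hm : 0 < m) (l : L) : {v | D.inc v l}.ncard = 2 * m := by
  have : {v | D.inc v l} = Set.range (D.pts l) := by
    ext v; simp [D.pts_inc]
  rw [this, ← Set.image_univ, Set.ncard_image_of_injective _ (D.pts_inj l), Set.ncard_univ,
    Nat.card_zmod]

theorem cover_ncard (hm : 0 < m) (o : Finset L) (ho : o ∈ D.orbs) :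
    (2 * m - 1) * o.card + 1 ≤ (D.cover o).ncard := by
  obtain ⟨l, rfl⟩ := D.mem_orbs ho
  by_cases hl : D.inv l = l
  · have h1 : (D.orb l).card = 1 := by simp [orb, hl]
    have h2 : {v | D.inc v l} ⊆ D.cover (D.orb l) := fun v hv => ⟨l, rfl, hv⟩
    have h3 := Set.ncard_le_ncard h2 (Set.toFinite _)
    rw [D.line_ncard hm] at h3
    rw [h1]; omega
  · have h1 : (D.orb l).card = 2 := by
      unfold orb; exact Finset.card_pair (Ne.symm hl)
    have h2 : {v | D.inc v l} ∪ {v | D.inc v (D.inv l)} ⊆ D.cover (D.orb l) := by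
      rintro v (hv | hv)
      · exact ⟨l, rfl, hv⟩
      · exact ⟨D.inv l, D.orb_inv l, hv⟩
    have h3 := Set.ncard_le_ncard h2 (Set.toFinite _)
    have h4 := Set.ncard_union_add_ncard_inter {v | D.inc v l} {v | D.inc v (D.inv l)}
    have h5 : ({v | D.inc v l} ∩ {v | D.inc v (D.inv l)}).ncard ≤ 1 := by
      rw [Set.ncard_le_one]
      rintro a ⟨ha, ha'⟩ b ⟨hb, hb'⟩
      by_contra hab
      exact hl (D.uniq a b l (D.inv l) hab ha hb ha' hb').symm
    rw [D.line_ncard hm, D.line_ncard hm] at h4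
    rw [h1]; omega

theorem common (hm : 0 < m) (o o' : Finset L) (ho : o ∈ D.orbs) (ho' : o' ∈ D.orbs) :
    ∃ u v, u ≠ v ∧ u ∈ D.cover o ∧ v ∈ D.cover o ∧ u ∈ D.cover o' ∧ v ∈ D.cover o' := by
  obtain ⟨l, rfl⟩ := D.mem_orbs ho
  obtain ⟨k, rfl⟩ := D.mem_orbs ho'
  have cl : ∀ l v, D.inc v l → v ∈ D.cover (D.orb l) := fun l v h => ⟨l, rfl, h⟩
  have ci : ∀ l v, D.inc v (D.inv l) → v ∈ D.cover (D.orb l) := fun l v h => ⟨_, D.orb_inv l, h⟩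
  by_cases hlk : D.orb k = D.orb l
  · rw [hlk]
    have h1 : 1 < {v | D.inc v l}.ncard := by rw [D.line_ncard hm]; omega
    rw [Set.one_lt_ncard_iff] at h1
    obtain ⟨u, v, hu, hv, huv⟩ := h1
    exact ⟨u, v, huv, cl _ _ hu, cl _ _ hv, cl _ _ hu, cl _ _ hv⟩
  · obtain ⟨p, p1, p2⟩ := D.meet l k
    obtain ⟨p', p1', p2'⟩ := D.meet l (D.inv k)
    by_cases hp : p = p'
    · subst hp
      obtain ⟨r, r1, r2⟩ := D.meet (D.inv l) k
      by_cases hpr : p = r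
      · subst hpr
        exfalso
        by_cases hl : l = D.l0
        · subst hl
          have := D.hA p k p2 p2' p1
          exact hlk (by rw [this])
        · have := D.hB p l k hl p1 r1 p2 p2'
          rcases this with h | h
          · exact hlk (by rw [h])
          · exact hlk (by rw [h, D.orb_inv])
      · exact ⟨p, r, hpr, cl _ _ p1, ci _ _ r1, cl _ _ p2, cl _ _ r2⟩
    · exact ⟨p, p', hp, cl _ _ p1, cl _ _ p1', cl _ _ p2, ci _ _ p2'⟩

theorem part_card (hm : 0 < m) (hV : Fintype.card V = (2 * m - 1) * (2 * m) + 1)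
    (hL : Fintype.card L = Fintype.card V)
    (o : Finset L) (ho : o ∈ D.orbs) (i : ℕ) (hi : i < m) :
    (D.part o i).ncard = (2 * m - 1) * o.card := by
  classical
  have hne : ∀ o ∈ D.orbs, (D.cover o).Nonempty := by
    intro o ho
    obtain ⟨u, v, huv, hu, _⟩ := D.common hm o o ho ho
    exact ⟨u, hu⟩
  have hle : ∀ x ∈ D.orbs ×ˢ Finset.range m,
      (2 * m - 1) * x.1.card ≤ (D.part x.1 x.2).toFinset.card := by
    rintro ⟨o, i⟩ hx
    rw [Finset.mem_product, Finset.mem_range] at hx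
    have h1 := card_le_of_reachable _ _ (D.cover_reach hm o i hx.2) (hne o hx.1)
    have h2 := D.cover_ncard hm o hx.1
    rw [D.edgeSet_part] at h1
    rw [← Set.ncard_eq_toFinset_card']
    dsimp only at *
    omega
  have hsum : ∑ x ∈ D.orbs ×ˢ Finset.range m, (D.part x.1 x.2).toFinset.card
      = (Fintype.card V).choose 2 := by
    rw [← Finset.card_biUnion, ← SimpleGraph.card_edgeFinset_top_eq_card_choose_two]
    · congr 1
      ext e
      rw [SimpleGraph.mem_edgeFinset]
      simp only [Finset.mem_biUnion, Finset.mem_product, Finset.mem_range, Set.mem_toFinset]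
      constructor
      · rintro ⟨x, -, hx⟩
        exact D.part_edge _ _ _ hx
      · intro he
        obtain ⟨o, ho, i, hi, h⟩ := D.edge_part hm e he
        exact ⟨(o, i), ⟨ho, hi⟩, h⟩
    · intro x _ y _ hxy
      refine Set.disjoint_toFinset.2 ?_
      apply D.part_disjoint
      rintro ⟨h1, h2⟩
      exact hxy (Prod.ext h1 h2)
  have hsum2 : ∑ x ∈ D.orbs ×ˢ Finset.range m, (2 * m - 1) * x.1.card
      = (Fintype.card V).choose 2 := by
    rw [Finset.sum_product]
    simp only [Finset.sum_const, Finset.card_range, smul_eq_mul]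
    rw [← Finset.mul_sum, ← Finset.mul_sum, D.sum_orbs, hL, Nat.choose_two_right, hV]
    rw [Nat.add_sub_cancel]
    symm
    apply Nat.div_eq_of_eq_mul_left (by norm_num)
    ring
  have := (Finset.sum_eq_sum_iff_of_le hle).1 (hsum2.trans hsum.symm) (o, i)
    (by rw [Finset.mem_product, Finset.mem_range]; exact ⟨ho, hi⟩)
  rw [Set.ncard_eq_toFinset_card']
  exact this.symm

theorem bound (D : PairedPlane V L m) (hm : 0 < m) (hV : Fintype.card V = (2 * m - 1) * (2 * m) + 1)
    (hL : Fintype.card L = Fintype.card V) :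
    m * (Fintype.card V + 1) ≤ 2 * achromaticArboricity (⊤ : SimpleGraph V) := by
  classical
  let I := {o // o ∈ D.orbs} × Fin m
  let k := Fintype.card I
  let e : Fin k ≃ I := (Fintype.equivFin I).symm
  have hk : k = D.orbs.card * m := by simp [k, I]
  have hmem : k ∈ {k | ∃ P : Fin k → Set (Sym2 V), IsCompleteForestPartition ⊤ k P} := by
    refine ⟨fun j => D.part (e j).1.1 (e j).2.1, ?_, ?_, ?_, ?_, ?_⟩
    · intro j
      have h := D.part_card hm hV hL (e j).1.1 (e j).1.2 (e j).2.1 (e j).2.2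
      apply Set.nonempty_of_ncard_ne_zero
      rw [h]
      obtain ⟨l, hl⟩ := D.mem_orbs (e j).1.2
      have : 0 < (e j).1.1.card := by rw [← hl]; exact Finset.card_pos.2 ⟨l, by simp [orb]⟩
      have : 0 < (2 * m - 1) * (e j).1.1.card := Nat.mul_pos (by omega) this
      omega
    · intro i j hij
      apply D.part_disjoint
      rintro ⟨h1, h2⟩
      exact hij (e.injective (Prod.ext (Subtype.ext h1) (Fin.ext h2)))
    · ext x
      rw [Set.mem_iUnion]
      constructor
      · rintro ⟨j, hj⟩
        exact D.part_edge _ _ _ hj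
      · intro hx
        obtain ⟨o, ho, i, hi, h⟩ := D.edge_part hm x hx
        refine ⟨e.symm (⟨o, ho⟩, ⟨i, hi⟩), ?_⟩
        simpa using h
    · intro j
      obtain ⟨u, v, huv, hu, _⟩ := D.common hm _ _ (e j).1.2 (e j).1.2
      apply acyclic_of_card _ _ (D.cover_reach hm (e j).1.1 (e j).2.1 (e j).2.2) ⟨u, hu⟩
      rw [D.edgeSet_part, D.part_card hm hV hL (e j).1.1 (e j).1.2 (e j).2.1 (e j).2.2]
      exact D.cover_ncard hm _ (e j).1.2
    · intro i j hij
      obtain ⟨u, v, huv, h1, h2, h3, h4⟩ := D.common hm _ _ (e i).1.2 (e j).1.2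
      apply not_acyclic_union _ _ _ u v huv
      · exact D.cover_reach hm _ _ (e i).2.2 u h1 v h2
      · exact D.cover_reach hm _ _ (e j).2.2 u h3 v h4
      · apply D.part_disjoint
        rintro ⟨h1, h2⟩
        exact hij (e.injective (Prod.ext (Subtype.ext h1) (Fin.ext h2)))
  have hbdd : BddAbove {k | ∃ P : Fin k → Set (Sym2 V), IsCompleteForestPartition ⊤ k P} := by
    refine ⟨Fintype.card (Sym2 V), ?_⟩
    rintro k ⟨P, h1, h2, -⟩
    choose f hf using h1
    have hinj : Function.Injective f := by
      intro i j hij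
      by_contra hne
      exact Set.disjoint_left.1 (h2 i j hne) (hf i) (hij ▸ hf j)
    simpa using Fintype.card_le_of_injective f hinj
  have h1 : k ≤ achromaticArboricity (⊤ : SimpleGraph V) := le_csSup hbdd hmem
  have h2 := D.card_orbs
  rw [hL] at h2
  calc m * (Fintype.card V + 1) ≤ m * (2 * D.orbs.card) := Nat.mul_le_mul_left _ h2
    _ = 2 * k := by rw [hk]; ring
    _ ≤ _ := Nat.mul_le_mul_left _ h1

end PairedPlane

open scoped LinearAlgebra.Projectivization in
theorem field_lemma1 {K E : Type*} [Field K] [Field E] [Algebra K E]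
    (h3 : Module.finrank K E = 3) (x : E) (hx : ∀ c : K, x ≠ algebraMap K E c) (a b c : K)
    (h : algebraMap K E a + algebraMap K E b * x + algebraMap K E c * x ^ 2 = 0) :
    a = 0 ∧ b = 0 ∧ c = 0 := by
  have hfin : FiniteDimensional K E := Module.finite_of_finrank_pos (by omega)
  have hint : IsIntegral K x := Algebra.IsIntegral.isIntegral x
  have hdeg : (minpoly K x).natDegree ∣ 3 := by
    rw [← h3]; exact minpoly.degree_dvd hint
  have hne1 : (minpoly K x).natDegree ≠ 1 := by
    intro h1
    rw [minpoly.natDegree_eq_one_iff] at h1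
    obtain ⟨c, hc⟩ := h1
    exact hx c hc.symm
  have hd : (minpoly K x).natDegree = 3 := by
    rcases (Nat.dvd_prime Nat.prime_three).1 hdeg with h | h
    · exact absurd h hne1
    · exact h
  let p : Polynomial K := Polynomial.C a + Polynomial.C b * Polynomial.X
    + Polynomial.C c * Polynomial.X ^ 2
  have hp : Polynomial.aeval x p = 0 := by
    simpa [p] using h
  have hp0 : p = 0 := by
    by_contra hne
    have h1 := Polynomial.natDegree_le_of_dvd (minpoly.dvd K x hp) hne
    have h2 : p.natDegree ≤ 2 := by
      simp only [p]; compute_degree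
    omega
  refine ⟨?_, ?_, ?_⟩
  · simpa [p, Polynomial.coeff_X, Polynomial.coeff_C] using congrArg (fun r => Polynomial.coeff r 0) hp0
  · simpa [p, Polynomial.coeff_X, Polynomial.coeff_C] using congrArg (fun r => Polynomial.coeff r 1) hp0
  · simpa [p, Polynomial.coeff_X, Polynomial.coeff_C] using congrArg (fun r => Polynomial.coeff r 2) hp0

theorem not_in_sq {K E : Type*} [Field K] [Field E] [Algebra K E]
    (h3 : Module.finrank K E = 3) (x : E) (hx : ∀ c : K, x ≠ algebraMap K E c) :
    ∀ c : K, x ^ 2 ≠ algebraMap K E c := by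
  intro c hc
  have := field_lemma1 h3 x hx (-c) 0 1 (by simp [hc])
  simp at this

/-- `x`, `x⁻¹`, `1` are linearly independent. -/
theorem field_lemmaA {K E : Type*} [Field K] [Field E] [Algebra K E]
    (h3 : Module.finrank K E = 3) (x : E) (hx0 : x ≠ 0) (φ : E →ₗ[K] K) (hφ : φ ≠ 0)
    (h1 : φ x = 0) (h2 : φ x⁻¹ = 0) (h4 : φ 1 = 0) : ∃ c : K, x = algebraMap K E c := by
  by_contra hx
  push Not at hx
  have hli : LinearIndependent K ![x⁻¹, 1, x] := by
    rw [Fintype.linearIndependent_iff]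
    intro g hg
    simp [Fin.sum_univ_three, Algebra.smul_def] at hg
    have := field_lemma1 h3 x hx (g 0) (g 1) (g 2) (by
      have h5 : x * (algebraMap K E (g 0) * x⁻¹ + algebraMap K E (g 1) + algebraMap K E (g 2) * x)
        = 0 := by rw [hg, mul_zero]
      rw [← h5]; field_simp)
    intro i; fin_cases i
    · exact this.1
    · exact this.2.1
    · exact this.2.2
  apply hφ
  have hfin : FiniteDimensional K E := Module.finite_of_finrank_pos (by omega)
  let B := basisOfLinearIndependentOfCardEqFinrank hli (by simp [h3])
  apply B.ext
  intro i
  simp only [B, coe_basisOfLinearIndependentOfCardEqFinrank]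
  fin_cases i
  · simpa using h2
  · simpa using h4
  · simpa using h1

theorem field_lemmaB {K E : Type*} [Field K] [Field E] [Algebra K E]
    (h3 : Module.finrank K E = 3) (x y : E) (hx0 : x ≠ 0) (hy0 : y ≠ 0)
    (hx : ∀ c : K, x ≠ algebraMap K E c)
    (φ : E →ₗ[K] K) (hφ : φ ≠ 0)
    (h1 : φ x = 0) (h2 : φ x⁻¹ = 0) (h4 : φ y = 0) (h5 : φ y⁻¹ = 0) :
    (∃ c : K, c • x = y) ∨ (∃ c : K, c • x⁻¹ = y) := by
  have hfin : FiniteDimensional K E := Module.finite_of_finrank_pos (by omega)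
  have hli : LinearIndependent K ![x⁻¹, x] := by
    rw [Fintype.linearIndependent_iff]
    intro g hg
    simp [Fin.sum_univ_two, Algebra.smul_def] at hg
    have := field_lemma1 h3 x hx (g 0) 0 (g 1) (by
      have h5 : x * (algebraMap K E (g 0) * x⁻¹ + algebraMap K E (g 1) * x)
        = 0 := by rw [hg, mul_zero]
      rw [← h5]; field_simp; simp)
    intro i; fin_cases i
    · exact this.1
    · exact this.2.2
  have hker : Module.finrank K (LinearMap.ker φ) = 2 := by
    have := LinearMap.finrank_range_add_finrank_ker φ
    rw [LinearMap.range_eq_top.2 (LinearMap.surjective hφ)] at this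
    simp [h3] at this
    omega
  have hspan : Submodule.span K (Set.range ![x⁻¹, x]) = LinearMap.ker φ := by
    apply Submodule.eq_of_le_of_finrank_eq
    · rw [Submodule.span_le]
      rintro _ ⟨i, rfl⟩
      fin_cases i
      · simpa using h2
      · simpa using h1
    · rw [finrank_span_eq_card hli, hker]; simp
  have hmem : ∀ z, φ z = 0 → ∃ a b : K, z = algebraMap K E a * x⁻¹ + algebraMap K E b * x := by
    intro z hz
    have hz' : z ∈ Submodule.span K (Set.range ![x⁻¹, x]) := by rw [hspan]; exact hz
    rw [Submodule.mem_span_range_iff_exists_fun] at hz'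
    obtain ⟨c, hc⟩ := hz'
    refine ⟨c 0, c 1, ?_⟩
    rw [← hc]; simp [Algebra.smul_def]
  obtain ⟨b, a, hy⟩ := hmem y h4
  obtain ⟨d, c, hyi⟩ := hmem _ h5
  have hprod : (algebraMap K E b * x⁻¹ + algebraMap K E a * x) *
      (algebraMap K E d * x⁻¹ + algebraMap K E c * x) = 1 := by
    rw [← hy, ← hyi]; exact mul_inv_cancel₀ hy0
  have hq := field_lemma1 h3 (x ^ 2) (not_in_sq h3 x hx) (b * d) (b * c + a * d - 1) (a * c) (by
    have : x ^ 2 * ((algebraMap K E b * x⁻¹ + algebraMap K E a * x) *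
      (algebraMap K E d * x⁻¹ + algebraMap K E c * x) - 1) = 0 := by rw [hprod]; simp
    rw [← this]
    simp only [map_mul, map_add, map_sub, map_one]
    field_simp
    ring)
  obtain ⟨e1, e2, e3⟩ := hq
  rcases mul_eq_zero.1 e1 with hb | hd
  · left; refine ⟨a, ?_⟩
    rw [hy, hb, Algebra.smul_def]; simp
  · rcases mul_eq_zero.1 e3 with ha | hc
    · right; refine ⟨b, ?_⟩
      rw [hy, ha, Algebra.smul_def]; simp
    · simp [hd, hc] at e2

open scoped LinearAlgebra.Projectivization

section Instantiate

variable {K E : Type} [Field K] [Field E] [Algebra K E] (ε : E ≃ₗ[K] (Fin 3 → K))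

/-- The projective line (or point) with homogeneous coordinate `x : E`. -/
def prj (x : E) (hx : x ≠ 0) : ℙ K (Fin 3 → K) :=
  Projectivization.mk K (ε x) (by simpa using hx)

theorem prj_surj (l : ℙ K (Fin 3 → K)) : ∃ x hx, prj ε x hx = l := by
  induction l with
  | h v hv =>
    refine ⟨ε.symm v, by simpa using hv, ?_⟩
    simp [prj]

theorem prj_eq_iff (x y : E) (hx : x ≠ 0) (hy : y ≠ 0) :
    prj ε x hx = prj ε y hy ↔ ∃ c : K, c • y = x := by
  unfold prj
  rw [Projectivization.mk_eq_mk_iff']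
  constructor
  · rintro ⟨c, hc⟩
    refine ⟨c, ε.injective ?_⟩
    rw [map_smul, hc]
  · rintro ⟨c, hc⟩
    refine ⟨c, ?_⟩
    rw [← map_smul, hc]

/-- Inversion on projective space of `E`. -/
noncomputable def prjInv (l : ℙ K (Fin 3 → K)) : ℙ K (Fin 3 → K) :=
  prj ε (prj_surj ε l).choose⁻¹ (inv_ne_zero (prj_surj ε l).choose_spec.choose)

theorem prjInv_prj (x : E) (hx : x ≠ 0) :
    prjInv ε (prj ε x hx) = prj ε x⁻¹ (inv_ne_zero hx) := by
  unfold prjInv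
  rw [prj_eq_iff]
  have h := (prj_surj ε (prj ε x hx)).choose_spec.choose_spec
  rw [prj_eq_iff] at h
  obtain ⟨c, hc⟩ := h
  refine ⟨c⁻¹, ?_⟩
  rw [← hc, smul_inv₀]

/-- The functional attached to a vector. -/
def func (v : Fin 3 → K) : E →ₗ[K] K :=
  (dotProductBilin K K v).comp ε.toLinearMap

theorem func_apply (v : Fin 3 → K) (x : E) : func ε v x = v ⬝ᵥ ε x := rfl

theorem func_ne_zero (v : Fin 3 → K) (hv : v ≠ 0) : func ε v ≠ 0 := by
  intro h
  apply hv
  rw [← dotProduct_eq_zero_iff]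
  intro w
  have := congrArg (fun f => f (ε.symm w)) h
  simpa [func_apply] using this

theorem exists_func (p : ℙ K (Fin 3 → K)) : ∃ φ : E →ₗ[K] K, φ ≠ 0 ∧
    ∀ x hx, p ∈ prj ε x hx ↔ φ x = 0 := by
  induction p with
  | h v hv =>
    refine ⟨func ε v, func_ne_zero ε v hv, fun x hx => ?_⟩
    rw [Configuration.ofField.mem_iff, prj, Projectivization.orthogonal_mk, func_apply]

end Instantiate

theorem exists_pairedPlane (K E : Type) [Field K] [Finite K] [Field E] [Algebra K E]
    (h3 : Module.finrank K E = 3) (q n m : ℕ) (hK : Nat.card K = q) (hm : q + 1 = 2 * m)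
    (hn : n = q ^ 2 + q + 1) : ∃ (L : Type) (_ : Fintype L) (_ : DecidableEq L),
    Fintype.card L = n ∧ Nonempty (PairedPlane (Fin n) L m) := by
  classical
  have hfin : FiniteDimensional K E := Module.finite_of_finrank_pos (by omega)
  have ε : E ≃ₗ[K] (Fin 3 → K) := LinearEquiv.ofFinrankEq _ _ (by simp [h3])
  let L := ℙ K (Fin 3 → K)
  have : Finite L := Projectivization.finite_iff_of_finite (k := K) (V := Fin 3 → K) |>.2 inferInstance
  have instL : Fintype L := Fintype.ofFinite L
  have hcard : Fintype.card L = n := by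
    rw [← Nat.card_eq_fintype_card, Projectivization.card_of_finrank K (Fin 3 → K) (n := 3) (by simp)]
    simp [Finset.sum_range_succ, hK, hn]
    ring
  have hord : Configuration.ProjectivePlane.order L L = q := by
    have h1 := Configuration.ProjectivePlane.card_points L L
    rw [hcard, hn] at h1
    rcases lt_trichotomy (Configuration.ProjectivePlane.order L L) q with h | h | h
    · nlinarith
    · exact h
    · nlinarith
  let eV : Fin n ≃ L := (Fintype.equivFinOfCardEq hcard).symm
  have hpts : ∀ l : L, Nonempty (ZMod (2 * m) ≃ {p : L // p ∈ l}) := by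
    intro l
    have h1 := Configuration.ProjectivePlane.pointCount_eq (P := L) l
    rw [hord, hm] at h1
    have hm0 : NeZero (2 * m) := ⟨by omega⟩
    have : Finite (ZMod (2 * m)) := Finite.of_fintype _
    refine Finite.card_eq.1 ?_
    rw [Nat.card_zmod, ← h1]; rfl
  let f := fun l => (hpts l).some
  refine ⟨L, instL, inferInstance, hcard, ⟨?_⟩⟩
  refine
    { inc := fun v l => eV v ∈ l
      line := ?_
      uniq := ?_
      meet := ?_
      pts := fun l a => eV.symm (f l a).1
      pts_inj := ?_
      pts_inc := ?_
      inv := prjInv ε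
      inv_inv := ?_
      l0 := prj ε 1 one_ne_zero
      inv_l0 := ?_
      fix := ?_
      hA := ?_
      hB := ?_ }
  · intro u v huv
    have := Configuration.HasLines.existsUnique_line L L (eV u) (eV v) (fun h => huv (eV.injective h))
    exact this.exists
  · intro u v l k huv h1 h2 h4 h5
    rcases Configuration.Nondegenerate.eq_or_eq h1 h2 h4 h5 with h | h
    · exact absurd (eV.injective h) huv
    · exact h
  · intro l k
    by_cases hlk : l = k
    · subst hlk
      exact ⟨eV.symm (f l 0).1, by simpa using (f l 0).2⟩
    · obtain ⟨p, hp, -⟩ := Configuration.HasPoints.existsUnique_point L L l k hlk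
      exact ⟨eV.symm p, by simpa using hp⟩
  · intro l a b hab
    exact (f l).injective (Subtype.ext (eV.symm.injective hab))
  · intro l v
    constructor
    · intro hv
      exact ⟨(f l).symm ⟨eV v, hv⟩, by simp⟩
    · rintro ⟨a, rfl⟩
      simpa using (f l a).2
  · intro l
    obtain ⟨x, hx, rfl⟩ := prj_surj ε l
    rw [prjInv_prj, prjInv_prj]
    simp
  · rw [prjInv_prj]; simp
  · intro l hl
    obtain ⟨x, hx, rfl⟩ := prj_surj ε l
    rw [prjInv_prj, prj_eq_iff] at hl
    obtain ⟨c, hc⟩ := hl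
    rw [prj_eq_iff]
    by_contra hne
    have hne' : ∀ c : K, x⁻¹ ≠ algebraMap K E c := by
      intro d hd
      apply hne
      refine ⟨d⁻¹, ?_⟩
      rw [Algebra.smul_def, mul_one, map_inv₀, ← hd, inv_inv]
    have hc0 : c ≠ 0 := by
      rintro rfl
      rw [zero_smul] at hc
      exact inv_ne_zero hx hc.symm
    apply not_in_sq h3 _ hne' c
    rw [pow_two]
    nth_rewrite 1 [← hc]
    rw [Algebra.smul_def, mul_assoc, mul_inv_cancel₀ hx, mul_one]
  · intro p l h1 h2 h4
    obtain ⟨x, hx, rfl⟩ := prj_surj ε l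
    rw [prjInv_prj] at h2
    obtain ⟨φ, hφ, h⟩ := exists_func ε (eV p)
    rw [h] at h1 h2 h4
    obtain ⟨c, hc⟩ := field_lemmaA h3 x hx φ hφ h1 h2 h4
    rw [prj_eq_iff]
    exact ⟨c, by rw [hc, Algebra.smul_def, mul_one]⟩
  · intro p l k hl h1 h2 h4 h5
    obtain ⟨x, hx, rfl⟩ := prj_surj ε l
    obtain ⟨y, hy, rfl⟩ := prj_surj ε k
    rw [prjInv_prj] at h2 h5 ⊢
    obtain ⟨φ, hφ, h⟩ := exists_func ε (eV p)
    rw [h] at h1 h2 h4 h5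
    rw [prj_eq_iff, prj_eq_iff]
    apply field_lemmaB h3 x y hx hy _ φ hφ h1 h2 h4 h5
    intro c hc
    apply hl
    rw [prj_eq_iff]
    exact ⟨c, by rw [hc, Algebra.smul_def, mul_one]⟩

/-- If `q` is an odd prime and `n = q² + q + 1`, then the achromatic
arboricity of `K_n` is at least `((q+1)/4)(n+1)`. -/
theorem achromaticArboricity_lower_bound_projective (q n : ℕ)
    (hq : q.Prime) (hodd : Odd q) (hn : n = q ^ 2 + q + 1) :
    ((q : ℝ) + 1) / 4 * ((n : ℝ) + 1) ≤
      (achromaticArboricity (⊤ : SimpleGraph (Fin n)) : ℝ) := by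
  obtain ⟨r, hr⟩ := hodd
  have hm : q + 1 = 2 * (r + 1) := by omega
  have hF : Fact q.Prime := ⟨hq⟩
  obtain ⟨L, iL, dL, hL, ⟨D⟩⟩ := exists_pairedPlane (ZMod q) (GaloisField q 3)
    (GaloisField.finrank q (by norm_num)) q n (r + 1) (Nat.card_zmod q) hm hn
  have hq' : 2 * (r + 1) - 1 = q := by omega
  have h := D.bound (by omega) (by rw [hq', ← hm, Fintype.card_fin, hn]; ring)
    (by rw [hL, Fintype.card_fin])
  rw [Fintype.card_fin] at h
  have h' : ((r : ℝ) + 1) * ((n : ℝ) + 1) ≤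
      2 * (achromaticArboricity (⊤ : SimpleGraph (Fin n)) : ℝ) := by exact_mod_cast h
  have hqr : (q : ℝ) = 2 * r + 1 := by exact_mod_cast hr
  rw [hqr]
  linarith
end

section
/- In the algebraic projective plane PG(2,q) with q an odd prime, the set of n = q²+q+1 lines can be partitioned into one singleton {L_0} and (q²+q)/2 pairs {l, m}, such that each pair of lines intersects in a point, and the intersection points assigned to distinct pairs are pairwise distinct. -/
variable (q : ℕ) [Fact (Nat.Prime q)]

/-- Points (and, by duality, lines) of the algebraic projective plane `PG(2,q)`,
given by homogeneous coordinates over `ℤ_q`. -/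
abbrev PGElem := Projectivization (ZMod q) (Fin 3 → ZMod q)

/-- Incidence in `PG(2,q)`: a point lies on a line iff their homogeneous
coordinates are orthogonal. -/
def pgIncident (p l : PGElem q) : Prop := ∑ i, p.rep i * l.rep i = 0

open Module in
lemma pgaux_quad {F K : Type*} [Field F] [Field K] [Algebra F K] (h3 : finrank F K = 3)
    (y : K) (hy : ∀ c : F, algebraMap F K c ≠ y) (a b c : F)
    (h : algebraMap F K a * y ^ 2 + algebraMap F K b * y + algebraMap F K c = 0) :
    a = 0 ∧ b = 0 ∧ c = 0 := by
  have : FiniteDimensional F K := FiniteDimensional.of_finrank_pos (by omega)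
  have hyint : IsIntegral F y := IsIntegral.of_finite F y
  have hdeg : (minpoly F y).natDegree = 3 := by
    have hd : (minpoly F y).natDegree ∣ 3 := h3 ▸ minpoly.degree_dvd hyint
    rcases (Nat.dvd_prime Nat.prime_three).1 hd with h1 | h1
    · exfalso
      obtain ⟨c, hc⟩ := minpoly.natDegree_eq_one_iff.1 h1
      exact hy c hc
    · exact h1
  set p : Polynomial F := Polynomial.C a * Polynomial.X ^ 2 + Polynomial.C b * Polynomial.X
    + Polynomial.C c with hp
  have hp0 : p = 0 := by
    by_contra hne
    have h1 : (minpoly F y).natDegree ≤ p.natDegree :=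
      Polynomial.natDegree_le_natDegree
        (minpoly.degree_le_of_ne_zero F y hne (by simpa [hp] using h))
    have h2 : p.natDegree ≤ 2 := Polynomial.natDegree_quadratic_le
    omega
  have e0 := congrArg (fun r => Polynomial.coeff r 0) hp0
  have e1 := congrArg (fun r => Polynomial.coeff r 1) hp0
  have e2 := congrArg (fun r => Polynomial.coeff r 2) hp0
  simp [hp, Polynomial.coeff_X, Polynomial.coeff_C] at e0 e1 e2
  exact ⟨e2, e1, e0⟩

lemma pgaux_sq {F K : Type*} [Field F] [Field K] [Algebra F K] (h3 : Module.finrank F K = 3)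
    (y : K) (hy : ∀ c : F, algebraMap F K c ≠ y) : ∀ c : F, algebraMap F K c ≠ y ^ 2 := by
  intro c hc
  have := (pgaux_quad h3 y hy 1 0 (-c) (by simp [hc])).1
  exact one_ne_zero this

open Module in
lemma pgaux_key {F K : Type*} [Field F] [Field K] [Algebra F K] (h3 : finrank F K = 3)
    (φ : K →ₗ[F] F) (hφ : φ ≠ 0) (y z : K) (hy : ∀ c : F, algebraMap F K c ≠ y) (hz : z ≠ 0)
    (h1 : φ y = 0) (h2 : φ y⁻¹ = 0) (h3' : φ z = 0) (h4 : φ z⁻¹ = 0) :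
    (∃ c : F, z = c • y) ∨ ∃ c : F, z = c • y⁻¹ := by
  have : FiniteDimensional F K := FiniteDimensional.of_finrank_pos (by omega)
  have hy0 : y ≠ 0 := fun h => hy 0 (by simp [h])
  have hy2 := pgaux_sq h3 y hy
  have hli : LinearIndependent F ![y, y⁻¹] := by
    rw [LinearIndependent.pair_iff]
    intro s t hst
    have := pgaux_quad h3 y hy s 0 t (by
      have := congrArg (· * y) hst
      simp only [Algebra.smul_def, add_mul, zero_mul, mul_assoc, inv_mul_cancel₀ hy0] at this
      simp only [map_zero, zero_mul, add_zero]
      rw [← this]; ring)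
    exact ⟨this.1, this.2.2⟩
  have hker : finrank F (LinearMap.ker φ) = 2 := by
    have hr := LinearMap.finrank_range_add_finrank_ker φ
    have hs : LinearMap.range φ = ⊤ := LinearMap.range_eq_top.2 (LinearMap.surjective hφ)
    rw [hs, finrank_top, h3, finrank_self] at hr
    omega
  have hspan : finrank F (Submodule.span F (Set.range ![y, y⁻¹])) = 2 := by
    simpa using finrank_span_eq_card hli
  have hle : Submodule.span F (Set.range ![y, y⁻¹]) ≤ LinearMap.ker φ := by
    rw [Submodule.span_le]
    rintro _ ⟨i, rfl⟩
    fin_cases i <;> simp [h1, h2]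
  have heq := Submodule.eq_of_le_of_finrank_eq hle (by rw [hspan, hker])
  rw [Matrix.range_cons, Matrix.range_cons, Matrix.range_empty, Set.union_empty,
    Set.singleton_union] at heq
  have mz : z ∈ LinearMap.ker φ := h3'
  have mz' : z⁻¹ ∈ LinearMap.ker φ := h4
  rw [← heq, Submodule.mem_span_pair] at mz mz'
  obtain ⟨a, b, hab⟩ := mz
  obtain ⟨c, d, hcd⟩ := mz'
  have hq := pgaux_quad h3 (y ^ 2) hy2 (a * c) (a * d + b * c - 1) (b * d) (by
    have hm : (a • y + b • y⁻¹) * (c • y + d • y⁻¹) = 1 := by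
      rw [hab, hcd, mul_inv_cancel₀ hz]
    simp only [Algebra.smul_def] at hm
    simp only [map_mul, map_add, map_sub, map_one]
    field_simp at hm
    linear_combination hm)
  obtain ⟨q1, q2, q3⟩ := hq
  by_cases ha : a = 0
  · right; exact ⟨b, by rw [← hab, ha]; simp⟩
  · have hc : c = 0 := (mul_eq_zero.1 q1).resolve_left ha
    by_cases hb : b = 0
    · left; exact ⟨a, by rw [← hab, hb]; simp⟩
    · have hd : d = 0 := (mul_eq_zero.1 q3).resolve_left hb
      simp [hc, hd] at q2

lemma pgaux_inc (p : PGElem q) (v : Fin 3 → ZMod q) (hv : v ≠ 0) :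
    pgIncident q p (Projectivization.mk (ZMod q) v hv) ↔ p.rep ⬝ᵥ v = 0 := by
  obtain ⟨a, ha⟩ := Projectivization.exists_smul_eq_mk_rep (ZMod q) v hv
  unfold pgIncident
  rw [← ha]
  change p.rep ⬝ᵥ (a • v) = 0 ↔ _
  rw [dotProduct_smul]
  simp [Units.smul_def]

lemma pgaux_pt (l m : PGElem q) : ∃ p, pgIncident q p l ∧ pgIncident q p m := by
  let f : (Fin 3 → ZMod q) →ₗ[ZMod q] (Fin 2 → ZMod q) := Matrix.mulVecLin ![l.rep, m.rep]
  have hk : LinearMap.ker f ≠ ⊥ := LinearMap.ker_ne_bot_of_finrank_lt (by simp)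
  obtain ⟨v, hv, hv0⟩ := Submodule.exists_mem_ne_zero_of_ne_bot hk
  have e0 : l.rep ⬝ᵥ v = 0 := congrFun hv 0
  have e1 : m.rep ⬝ᵥ v = 0 := congrFun hv 1
  have hs : ∀ p l : PGElem q, pgIncident q p l ↔ pgIncident q l p := by
    intro p l
    unfold pgIncident
    simp only [mul_comm]
  refine ⟨Projectivization.mk (ZMod q) v hv0, ?_, ?_⟩
  · rw [hs, pgaux_inc]; exact e0
  · rw [hs, pgaux_inc]; exact e1

/-- There is an involution on lines with a unique fixed line, such that no point lies on two
of its pairs. -/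
lemma pgaux_invol : ∃ (L₀ : PGElem q) (σ : PGElem q → PGElem q),
    (∀ l, σ (σ l) = l) ∧ (∀ l, σ l = l ↔ l = L₀) ∧
    ∀ p l m, l ≠ L₀ → m ≠ L₀ → pgIncident q p l → pgIncident q p (σ l) →
      pgIncident q p m → pgIncident q p (σ m) → m = l ∨ m = σ l := by
  have h3 : Module.finrank (ZMod q) (GaloisField q 3) = 3 := GaloisField.finrank q (by norm_num)
  let e : (Fin 3 → ZMod q) ≃ₗ[ZMod q] GaloisField q 3 :=
    LinearEquiv.ofFinrankEq _ _ (by rw [h3]; simp)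
  have key0 : ∀ y : GaloisField q 3, y ≠ 0 → e.symm y ≠ 0 := fun y hy => by simpa using hy
  let M : ∀ y : GaloisField q 3, y ≠ 0 → PGElem q := fun y hy =>
    Projectivization.mk (ZMod q) (e.symm y) (key0 y hy)
  have hM : ∀ y z (hy : y ≠ 0) (hz : z ≠ 0), M y hy = M z hz ↔ ∃ c : ZMod q, c • z = y := by
    intro y z hy hz
    simp only [M, Projectivization.mk_eq_mk_iff', ← map_smul, e.symm.injective.eq_iff]
  have hne : ∀ l : PGElem q, e l.rep ≠ 0 := fun l => by simpa using l.rep_nonzero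
  have hrep : ∀ l : PGElem q, M (e l.rep) (hne l) = l := by
    intro l
    simp only [M, LinearEquiv.symm_apply_apply, Projectivization.mk_rep]
  let σ : PGElem q → PGElem q := fun l => M (e l.rep)⁻¹ (inv_ne_zero (hne l))
  have hσ : ∀ y (hy : y ≠ 0), σ (M y hy) = M y⁻¹ (inv_ne_zero hy) := by
    intro y hy
    obtain ⟨c, hc⟩ := (hM _ _ (hne _) hy).1 (hrep (M y hy))
    refine (hM _ _ (inv_ne_zero (hne _)) (inv_ne_zero hy)).2 ⟨c⁻¹, ?_⟩
    rw [← hc, smul_inv₀]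
  have ind : ∀ l : PGElem q, ∃ y hy, l = M y hy := fun l => ⟨_, hne l, (hrep l).symm⟩
  have hL : ∀ y hy, M y hy ≠ M 1 one_ne_zero →
      ∀ c : ZMod q, algebraMap (ZMod q) (GaloisField q 3) c ≠ y := by
    intro y hy h c hc
    exact h ((hM _ _ hy one_ne_zero).2 ⟨c, by rw [← hc, Algebra.smul_def, mul_one]⟩)
  refine ⟨M 1 one_ne_zero, σ, ?_, ?_, ?_⟩
  · intro l
    obtain ⟨y, hy, rfl⟩ := ind l
    rw [hσ y hy, hσ y⁻¹ (inv_ne_zero hy)]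
    simp only [inv_inv]
  · intro l
    obtain ⟨y, hy, rfl⟩ := ind l
    rw [hσ y hy]
    constructor
    · intro h
      by_contra hn
      obtain ⟨c, hc⟩ := (hM _ _ hy (inv_ne_zero hy)).1 h.symm
      refine pgaux_sq h3 y (hL y hy hn) c ?_
      rw [Algebra.smul_def] at hc
      nth_rewrite 1 [pow_two, ← hc]
      field_simp
    · intro h
      obtain ⟨c, hc⟩ := (hM _ _ hy one_ne_zero).1 h
      refine (hM _ _ (inv_ne_zero hy) hy).2 ⟨c⁻¹ * c⁻¹, ?_⟩
      have hc0 : c ≠ 0 := by rintro rfl; simp at hc; exact hy hc.symm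
      rw [← hc, smul_inv₀, smul_smul]
      simp [hc0]
  · intro p l m hl hm
    obtain ⟨y, hy, rfl⟩ := ind l
    obtain ⟨z, hz, rfl⟩ := ind m
    rw [hσ y hy, hσ z hz]
    simp only [M, pgaux_inc]
    intro i1 i2 i3 i4
    let φ : GaloisField q 3 →ₗ[ZMod q] ZMod q :=
      (dotProductBilin (ZMod q) (ZMod q) p.rep) ∘ₗ e.symm.toLinearMap
    have hφ : φ ≠ 0 := by
      intro h
      apply p.rep_nonzero
      refine dotProduct_eq_zero _ fun w => ?_
      have := LinearMap.congr_fun h (e w)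
      simpa [φ] using this
    rcases pgaux_key h3 φ hφ y z (hL y hy hl) hz i1 i2 i3 i4 with ⟨c, hc⟩ | ⟨c, hc⟩
    · left; exact (hM _ _ hz hy).2 ⟨c, hc.symm⟩
    · right; exact (hM _ _ hz (inv_ne_zero hy)).2 ⟨c, hc.symm⟩

/-- In `PG(2,q)` with `q` an odd prime, the `q²+q+1` lines can be
partitioned into one singleton `{L₀}` and `(q²+q)/2` pairs of lines, each pair
having an intersection point, with pairwise distinct intersection points. -/
theorem pg_lines_pairing (hodd : Odd q) :
    ∃ (L₀ : PGElem q) (pairs : Finset (PGElem q × PGElem q))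
      (pt : PGElem q × PGElem q → PGElem q),
      pairs.card = (q ^ 2 + q) / 2 ∧
      (∀ p ∈ pairs, p.1 ≠ p.2 ∧ p.1 ≠ L₀ ∧ p.2 ≠ L₀ ∧
        pgIncident q (pt p) p.1 ∧ pgIncident q (pt p) p.2) ∧
      (∀ l : PGElem q, l ≠ L₀ → ∃! p, p ∈ pairs ∧ (l = p.1 ∨ l = p.2)) ∧
      (∀ p ∈ pairs, ∀ p' ∈ pairs, pt p = pt p' → p = p') := by
    classical
  obtain ⟨L₀, σ, hσσ, hfix, hkey⟩ := pgaux_invol q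
  have : Finite (PGElem q) := inferInstance
  have : Fintype (PGElem q) := Fintype.ofFinite _
  let f := Fintype.equivFin (PGElem q)
  have hσ0 : σ L₀ = L₀ := (hfix _).2 rfl
  have hσne : ∀ l, l ≠ L₀ → σ l ≠ L₀ := by
    intro l hl h
    apply hl
    rw [← hσσ l, h, hσ0]
  choose pt hpt using fun p : PGElem q × PGElem q => pgaux_pt q p.1 p.2
  let A : Finset (PGElem q) := Finset.univ.filter fun l => f l < f (σ l)
  let B : Finset (PGElem q) := Finset.univ.filter fun l => f (σ l) < f l
  have hinj : Function.Injective fun l : PGElem q => (l, σ l) := fun a b h => (Prod.ext_iff.1 h).1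
  have hA : ∀ l, f l < f (σ l) → l ≠ L₀ := by
    rintro l h rfl
    rw [hσ0] at h
    exact lt_irrefl _ h
  refine ⟨L₀, A.image fun l => (l, σ l), pt, ?_, ?_, ?_, ?_⟩
  · rw [Finset.card_image_of_injective _ hinj]
    have hAB : A.card = B.card := by
      apply Finset.card_bij' (fun l _ => σ l) (fun l _ => σ l) <;> simp [A, B, hσσ]
    have hdis : Disjoint A B := by
      rw [Finset.disjoint_left]
      intro l h1 h2
      simp only [A, B, Finset.mem_filter] at h1 h2
      exact lt_asymm h1.2 h2.2
    have hun : A ∪ B = Finset.univ.erase L₀ := by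
      ext l
      simp only [A, B, Finset.mem_union, Finset.mem_filter, Finset.mem_univ, true_and,
        Finset.mem_erase, and_true]
      rw [lt_or_lt_iff_ne, f.injective.ne_iff,
        ne_comm, Ne, hfix]
    have hc := Finset.card_union_of_disjoint hdis
    rw [hun, Finset.card_erase_of_mem (Finset.mem_univ _), Finset.card_univ] at hc
    have hcard : Fintype.card (PGElem q) = q ^ 2 + q + 1 := by
      rw [← Nat.card_eq_fintype_card, Projectivization.card_of_finrank (ZMod q) _ (n := 3) (by simp)]
      simp [Finset.sum_range_succ]
      ring
    omega
  · simp only [Finset.mem_image, A, Finset.mem_filter, Finset.mem_univ, true_and]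
    rintro _ ⟨l, hl, rfl⟩
    have h0 := hA l hl
    exact ⟨fun h => h0 ((hfix l).1 h.symm), h0, hσne l h0, hpt _⟩
  · intro l hl
    simp only [Finset.mem_image, A, Finset.mem_filter, Finset.mem_univ, true_and]
    have hn : f l ≠ f (σ l) := fun h => hl ((hfix l).1 (f.injective h).symm)
    rcases lt_or_gt_of_ne hn with h | h
    · refine ⟨(l, σ l), ⟨⟨l, h, rfl⟩, Or.inl rfl⟩, ?_⟩
      rintro _ ⟨⟨m, hm, rfl⟩, h1 | h1⟩
      · simp only at h1; rw [h1]
      · simp only at h1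
        rw [h1, hσσ] at h
        exact absurd h (lt_asymm hm)
    · refine ⟨(σ l, l), ⟨⟨σ l, by rwa [hσσ], by rw [hσσ]⟩, Or.inr rfl⟩, ?_⟩
      rintro _ ⟨⟨m, hm, rfl⟩, h1 | h1⟩
      · simp only at h1
        rw [h1] at h
        exact absurd h (lt_asymm hm)
      · simp only at h1; rw [h1, hσσ]
  · simp only [Finset.mem_image, A, Finset.mem_filter, Finset.mem_univ, true_and]
    rintro _ ⟨l, hl, rfl⟩ _ ⟨m, hm, rfl⟩ h
    have a := hpt (l, σ l)
    have b := hpt (m, σ m)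
    rw [← h] at b
    rcases hkey _ l m (hA l hl) (hA m hm) a.1 a.2 b.1 b.2 with h1 | h1
    · rw [h1]
    · rw [h1, hσσ] at hm
      exact absurd hl (lt_asymm hm)
end

section
/- The achromatic arboricity of the complete graph K_5 equals 4. -/
open SimpleGraph

/-- Edges of a closed walk of length three. -/
def triE (a b c : Fin 5) : Finset (Sym2 (Fin 5)) := {s(a, b), s(b, c), s(c, a)}

/-- Edges of a closed walk of length four. -/
def quadE (a b c d : Fin 5) : Finset (Sym2 (Fin 5)) := {s(a, b), s(b, c), s(c, d), s(d, a)}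

/-- All short cycles of `K_5`. -/
def shortCycles : List (Finset (Sym2 (Fin 5))) :=
  [triE 0 1 2, triE 0 1 3, triE 0 1 4, triE 0 2 3, triE 0 2 4, triE 0 3 4,
   triE 1 2 3, triE 1 2 4, triE 1 3 4, triE 2 3 4,
   quadE 0 1 2 3, quadE 0 1 3 2, quadE 0 2 1 3,
   quadE 0 1 2 4, quadE 0 1 4 2, quadE 0 2 1 4,
   quadE 0 1 3 4, quadE 0 1 4 3, quadE 0 3 1 4,
   quadE 0 2 3 4, quadE 0 2 4 3, quadE 0 3 2 4,
   quadE 1 2 3 4, quadE 1 2 4 3, quadE 1 3 2 4]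

/-- An injective numbering of unordered pairs. -/
def idx : Sym2 (Fin 5) → ℕ :=
  Sym2.lift ⟨fun a b => 5 * (min a b).val + (max a b).val, by
    intro a b
    simp only [min_comm, max_comm]⟩

lemma idx_inj : ∀ x y : Sym2 (Fin 5), idx x = idx y → x = y := by decide +kernel

lemma idx_lt : ∀ x : Sym2 (Fin 5), idx x < 25 := by decide +kernel

/-- Bit mask of a set of pairs. -/
def mask (S : Finset (Sym2 (Fin 5))) : ℕ := S.fold (· ||| ·) 0 (fun e => 2 ^ idx e)

lemma mask_empty : mask ∅ = 0 := by simp [mask]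

lemma mask_insert (e : Sym2 (Fin 5)) (S : Finset (Sym2 (Fin 5))) :
    mask (insert e S) = 2 ^ idx e ||| mask S := by
  simp [mask, Finset.fold_insert_idem]

lemma mask_singleton (e : Sym2 (Fin 5)) : mask {e} = 2 ^ idx e := by
  simp [mask]

lemma testBit_mask (S : Finset (Sym2 (Fin 5))) (n : ℕ) :
    (mask S).testBit n = true ↔ ∃ e ∈ S, idx e = n := by
  induction S using Finset.induction_on with
  | empty => simp [mask_empty]
  | insert e S _ ih =>
    rw [mask_insert, Nat.testBit_or, Bool.or_eq_true, ih, Nat.testBit_two_pow]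
    simp

lemma disjoint_iff_mask (X Y : Finset (Sym2 (Fin 5))) :
    Disjoint X Y ↔ mask X &&& mask Y = 0 := by
  constructor
  · intro h
    apply Nat.eq_of_testBit_eq
    intro n
    rw [Nat.testBit_and, Nat.zero_testBit, Bool.eq_false_iff, ne_eq, Bool.and_eq_true,
      testBit_mask, testBit_mask]
    rintro ⟨⟨e, he, h1⟩, ⟨f, hf, h2⟩⟩
    obtain rfl := idx_inj e f (h1.trans h2.symm)
    exact Finset.disjoint_left.1 h he hf
  · intro h
    rw [Finset.disjoint_left]
    intro e h1 h2
    have h3 := (testBit_mask X (idx e)).2 ⟨e, h1, rfl⟩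
    have h4 := (testBit_mask Y (idx e)).2 ⟨e, h2, rfl⟩
    have h5 : (mask X &&& mask Y).testBit (idx e) = true := by
      rw [Nat.testBit_and, h3, h4]; rfl
    rw [h] at h5
    simp at h5

lemma mask_union (X Y : Finset (Sym2 (Fin 5))) : mask (X ∪ Y) = mask X ||| mask Y := by
  apply Nat.eq_of_testBit_eq
  intro n
  rw [Nat.testBit_or, Bool.eq_iff_iff, Bool.or_eq_true, testBit_mask, testBit_mask, testBit_mask]
  simp only [Finset.mem_union, or_and_right, exists_or]

lemma mask_sdiff (X Y : Finset (Sym2 (Fin 5))) :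
    mask (X \ Y) = mask X ^^^ (mask X &&& mask Y) := by
  apply Nat.eq_of_testBit_eq
  intro n
  have h1 := testBit_mask X n
  have h2 := testBit_mask Y n
  have h3 : (mask (X \ Y)).testBit n = true ↔
      ((mask X).testBit n = true ∧ ¬ (mask Y).testBit n = true) := by
    rw [testBit_mask, h1, h2]
    constructor
    · rintro ⟨e, he, rfl⟩
      rw [Finset.mem_sdiff] at he
      refine ⟨⟨e, he.1, rfl⟩, ?_⟩
      rintro ⟨f, hf, h⟩
      rw [idx_inj f e h] at hf
      exact he.2 hf
    · rintro ⟨⟨e, he, rfl⟩, h⟩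
      exact ⟨e, Finset.mem_sdiff.2 ⟨he, fun h' => h ⟨e, h', rfl⟩⟩, rfl⟩
  rw [Nat.testBit_xor, Nat.testBit_and]
  revert h3
  cases (mask (X \ Y)).testBit n <;> cases (mask X).testBit n <;>
    cases (mask Y).testBit n <;> simp

/-- Masks of the short cycles. -/
def cycMasks : List ℕ := [134, 266, 530, 8204, 16404, 524312, 8576, 17024, 525056, 548864, 8330, 8454, 396, 16530, 16902, 660, 524562, 524810, 792, 532500, 540684, 24600, 533120, 541056, 25344]

/-- Masks of the edges. -/
def edgeMasks : List ℕ := [2, 4, 8, 16, 128, 256, 512, 8192, 16384, 524288]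

lemma mask_edge : ∀ x : Sym2 (Fin 5), ¬ x.IsDiag → 2 ^ idx x ∈ edgeMasks := by decide +kernel

lemma map_mask : shortCycles.map mask = cycMasks := by
  simp only [shortCycles, triE, quadE, List.map, mask_insert, mask_singleton]
  decide +kernel

lemma mem_of_mask (X : Finset (Sym2 (Fin 5))) (h : mask X ∈ cycMasks) : X ∈ shortCycles := by
  rw [← map_mask] at h
  obtain ⟨T, hT, h⟩ := List.mem_map.1 h
  have sub : ∀ Y Z : Finset (Sym2 (Fin 5)), mask Y = mask Z → Y ⊆ Z := by
    intro Y Z hYZ e he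
    have h1 := (testBit_mask Y (idx e)).2 ⟨e, he, rfl⟩
    rw [hYZ, testBit_mask] at h1
    obtain ⟨f, hf, h2⟩ := h1
    rwa [← idx_inj f e h2]
  rwa [← Finset.Subset.antisymm (sub T X h) (sub X T h.symm)]

lemma triE_mem (a b c : Fin 5) (h1 : a ≠ b) (h2 : b ≠ c) (h3 : c ≠ a) :
    triE a b c ∈ shortCycles := by
  apply mem_of_mask
  rw [triE, mask_insert, mask_insert, mask_singleton]
  revert a b c
  decide +kernel

lemma quadE_mem (a b c d : Fin 5) (h1 : a ≠ b) (h2 : a ≠ c) (h3 : a ≠ d) (h4 : b ≠ c)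
    (h5 : b ≠ d) (h6 : c ≠ d) : quadE a b c d ∈ shortCycles := by
  apply mem_of_mask
  rw [quadE, mask_insert, mask_insert, mask_insert, mask_singleton]
  revert a b c d
  decide +kernel

lemma exists_shortCycle (S : Finset (Sym2 (Fin 5))) (hS : S.card ≤ 4)
    (h : ¬ (fromEdgeSet (S : Set (Sym2 (Fin 5)))).IsAcyclic) :
    ∃ T ∈ shortCycles, T ⊆ S := by
  simp only [IsAcyclic, not_forall, not_not] at h
  obtain ⟨v, p, hp⟩ := h
  have hsub : p.edges.toFinset ⊆ S := by
    intro e he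
    have := p.edges_subset_edgeSet (List.mem_toFinset.1 he)
    simp at this
    exact this.1
  have hlen : p.length ≤ 4 := by
    have h1 := Finset.card_le_card hsub
    rw [List.toFinset_card_of_nodup hp.edges_nodup, Walk.length_edges] at h1
    omega
  have h3 := hp.three_le_length
  have hnd := hp.support_nodup
  match p, hp, hsub, hlen, h3, hnd with
  | .cons (v := b) h1 (.cons (v := c) h2 (.cons h3 .nil)), hp, hsub, _, _, hnd =>
    refine ⟨triE v b c, triE_mem _ _ _ h1.ne h2.ne h3.ne, ?_⟩
    intro e he
    apply hsub
    simpa [triE] using he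
  | .cons (v := b) h1 (.cons (v := c) h2 (.cons (v := d) h3 (.cons h4 .nil))), hp, hsub, _, _, hnd =>
    simp at hnd
    refine ⟨quadE v b c d, quadE_mem _ _ _ _ ?_ ?_ ?_ ?_ ?_ ?_, ?_⟩
    any_goals grind
    intro e he
    apply hsub
    simpa [quadE] using he
  | .cons _ (.cons _ (.cons _ (.cons _ (.cons _ _)))), _, _, hl, _, _ =>
    simp at hl
    omega

lemma tri_not_acyclic (S : Set (Sym2 (Fin 5))) (a b c : Fin 5) (h1 : a ≠ b) (h2 : b ≠ c)
    (h3 : c ≠ a) (h : (triE a b c : Set (Sym2 (Fin 5))) ⊆ S) :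
    ¬ (fromEdgeSet S).IsAcyclic := by
  simp [triE, Set.insert_subset_iff] at h
  obtain ⟨e1, e2, e3⟩ := h
  intro hA
  refine hA (v := a) (.cons (v := b) (by simp [*]) (.cons (v := c) (by simp [*])
    (.cons (v := a) (by simp [*]) .nil))) ?_
  rw [Walk.cons_isCycle_iff]
  simp [Walk.cons_isPath_iff]
  grind

lemma quad_not_acyclic (S : Set (Sym2 (Fin 5))) (a b c d : Fin 5)
    (hd : a ≠ b ∧ a ≠ c ∧ a ≠ d ∧ b ≠ c ∧ b ≠ d ∧ c ≠ d)
    (h : (quadE a b c d : Set (Sym2 (Fin 5))) ⊆ S) :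
    ¬ (fromEdgeSet S).IsAcyclic := by
  simp [quadE, Set.insert_subset_iff] at h
  obtain ⟨e1, e2, e3, e4⟩ := h
  obtain ⟨d1, d2, d3, d4, d5, d6⟩ := hd
  intro hA
  refine hA (v := a) (.cons (v := b) (by simp [*]) (.cons (v := c) (by simp [*])
    (.cons (v := d) (by simp [*]) (.cons (v := a) (by simp [*, d3.symm]) .nil)))) ?_
  rw [Walk.cons_isCycle_iff]
  simp [Walk.cons_isPath_iff]
  grind

/-- Remove the lowest bit. -/
def dropBit (m : ℕ) : ℕ := m &&& (m - 1)

lemma dropBit_two : ∀ p < 25, ∀ q < 25, dropBit (dropBit (2 ^ p ||| 2 ^ q)) = 0 := by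
  decide +kernel

lemma small_mask (X : Finset (Sym2 (Fin 5))) (h : X.card ≤ 2) :
    dropBit (dropBit (mask X)) = 0 := by
  rcases Nat.lt_or_ge X.card 1 with h0 | h0
  · have : X = ∅ := by rw [← Finset.card_eq_zero]; omega
    rw [this, mask_empty]
    decide
  rcases Nat.lt_or_ge X.card 2 with h1 | h1
  · obtain ⟨e, rfl⟩ := Finset.card_eq_one.1 (show X.card = 1 by omega)
    have := dropBit_two (idx e) (idx_lt e) (idx e) (idx_lt e)
    rw [Nat.or_self] at this
    rwa [mask_singleton]
  · obtain ⟨e, f, _, rfl⟩ := Finset.card_eq_two.1 (show X.card = 2 by omega)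
    rw [mask_insert, mask_singleton]
    exact dropBit_two (idx e) (idx_lt e) (idx f) (idx_lt f)

lemma small_mask_one (X : Finset (Sym2 (Fin 5))) (h : X.card ≤ 1) : dropBit (mask X) = 0 := by
  have h1 : ∀ p < 25, dropBit (2 ^ p) = 0 := by decide +kernel
  rcases Nat.lt_or_ge X.card 1 with h0 | h0
  · have : X = ∅ := by rw [← Finset.card_eq_zero]; omega
    rw [this, mask_empty]
    decide
  · obtain ⟨e, rfl⟩ := Finset.card_eq_one.1 (show X.card = 1 by omega)
    rw [mask_singleton]
    exact h1 _ (idx_lt e)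

lemma shortCycles_card (T : Finset (Sym2 (Fin 5))) (hT : T ∈ shortCycles) : 3 ≤ T.card := by
  by_contra hlt
  have h1 := small_mask T (by omega)
  have h2 : ∀ m ∈ cycMasks, dropBit (dropBit m) ≠ 0 := by decide +kernel
  exact h2 _ (by rw [← map_mask]; exact List.mem_map_of_mem hT) h1

/-- The witness partition. -/
def wit : Fin 4 → Finset (Sym2 (Fin 5)) :=
  ![{s(0, 1)}, {s(0, 2), s(1, 2), s(3, 4)}, {s(0, 3), s(1, 3), s(2, 4)},
    {s(0, 4), s(1, 4), s(2, 3)}]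

/-- Masks of the witness partition. -/
def witMasks : List ℕ := [2, 524420, 16648, 8720]

lemma mask_wit (i : Fin 4) : mask (wit i) ∈ witMasks := by
  fin_cases i <;> simp only [wit, Fin.zero_eta, Fin.mk_one, Fin.reduceFinMk, Matrix.cons_val,
    mask_insert, mask_singleton] <;> decide +kernel

lemma wit_ok : IsCompleteForestPartition (⊤ : SimpleGraph (Fin 5)) 4 (fun i => (wit i : Set _)) := by
  refine ⟨?_, ?_, ?_, ?_, ?_⟩
  · intro i
    fin_cases i <;> simp [wit]
  · intro i j hij
    rw [Finset.disjoint_coe]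
    revert i j
    decide +kernel
  · ext e
    have : ∀ e : Sym2 (Fin 5), (∃ i, e ∈ wit i) ↔ ¬ e.IsDiag := by decide +kernel
    simpa using this e
  · intro i
    by_contra hc
    have h1 : ∀ i, (wit i).card ≤ 4 := by decide +kernel
    obtain ⟨T, hT, hs⟩ := exists_shortCycle _ (h1 i) hc
    have h2 : ∀ m ∈ cycMasks, ∀ w ∈ witMasks, m ^^^ (m &&& w) ≠ 0 := by decide +kernel
    refine h2 (mask T) (by rw [← map_mask]; exact List.mem_map_of_mem hT) (mask (wit i))
      (mask_wit i) ?_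
    rw [← mask_sdiff, Finset.sdiff_eq_empty_iff_subset.2 hs, mask_empty]
  · have key : ∀ i j, i < j → ∃ a b c d : Fin 5, (a ≠ b ∧ b ≠ c ∧ c ≠ a ∧
        triE a b c ⊆ wit i ∪ wit j) ∨ ((a ≠ b ∧ a ≠ c ∧ a ≠ d ∧ b ≠ c ∧ b ≠ d ∧ c ≠ d) ∧
        quadE a b c d ⊆ wit i ∪ wit j) := by
      intro i j hij
      by_cases h0 : i = 0
      · subst h0
        refine ⟨0, 1, j.succ, 0, Or.inl ?_⟩
        revert j
        decide +kernel
      · refine ⟨0, i.succ, 1, j.succ, Or.inr ?_⟩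
        revert i j
        decide +kernel
    have key2 : ∀ i j, i < j →
        ¬ (fromEdgeSet ((wit i : Set (Sym2 (Fin 5))) ∪ (wit j : Set _))).IsAcyclic := by
      intro i j hij
      obtain ⟨a, b, c, d, ⟨h1, h2, h3, h4⟩ | ⟨h1, h2⟩⟩ := key i j hij
      · exact tri_not_acyclic _ a b c h1 h2 h3 (by exact_mod_cast h4)
      · exact quad_not_acyclic _ a b c d h1 (by exact_mod_cast h2)
    intro i j hij
    rcases lt_or_gt_of_ne hij with h | h
    · exact key2 i j h
    · have := key2 j i h
      rwa [Set.union_comm] at this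

/-- What remains of short cycles once the edges of `A` are removed, if at most two edges. -/
def rests (A : Finset (Sym2 (Fin 5))) : List (Finset (Sym2 (Fin 5))) :=
  (shortCycles.map (· \ A)).filter (fun X => X.card ≤ 2)

lemma exists_rest (A B : Finset (Sym2 (Fin 5))) (hA : A.card ≤ 2) (hB : B.card ≤ 2)
    (h : ¬ (fromEdgeSet ((A : Set (Sym2 (Fin 5))) ∪ (B : Set _))).IsAcyclic) :
    ∃ X ∈ rests A, X ⊆ B := by
  have hc := Finset.card_union_le A B
  obtain ⟨T, hT, hs⟩ := exists_shortCycle (A ∪ B) (by omega) (by simpa using h)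
  have h1 : T \ A ⊆ B := by
    intro e he
    have := @hs e
    grind
  refine ⟨T \ A, ?_, h1⟩
  have := Finset.card_le_card h1
  simp only [rests, List.mem_filter, List.mem_map, decide_eq_true_eq]
  exact ⟨⟨T, hT, rfl⟩, by omega⟩

/-- Masks of what remains of short cycles. -/
def restMasks (a : ℕ) : List ℕ :=
  (cycMasks.map (fun m => m ^^^ (m &&& a))).filter (fun m => Nat.beq (dropBit (dropBit m)) 0)

lemma mask_rest (A X : Finset (Sym2 (Fin 5))) (h : X ∈ rests A) :
    mask X ∈ restMasks (mask A) := by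
  simp only [rests, List.mem_filter, List.mem_map, decide_eq_true_eq] at h
  obtain ⟨⟨T, hT, rfl⟩, hc⟩ := h
  simp only [restMasks, List.mem_filter, List.mem_map, Nat.beq_eq]
  exact ⟨⟨mask T, by rw [← map_mask]; exact List.mem_map_of_mem hT, (mask_sdiff T A).symm⟩,
    small_mask _ hc⟩

/-- No four pairwise disjoint masks in a list. -/
def noFour (R : List ℕ) : Bool :=
  R.all fun a => R.all fun b => !(Nat.beq (a &&& b) 0) ||
    R.all fun c => !(Nat.beq ((a ||| b) &&& c) 0) ||
      R.all fun d => !(Nat.beq ((a ||| b ||| c) &&& d) 0)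

/-- Masks of the paths with two edges. -/
def pathMasks : List ℕ := [6, 10, 18, 130, 258, 514, 12, 20, 132, 8196, 16388, 24, 264, 8200, 524296, 528, 16400, 524304, 384, 640, 8320, 16512, 768, 8448, 524544, 16896, 524800, 24576, 532480, 540672]

lemma noFour_path : (pathMasks.all fun m => noFour (restMasks m)) = true := by
  decide +kernel

/-- Masks that can still occur once paths with two edges are excluded. -/
def restMasks' (m : ℕ) : List ℕ :=
  (restMasks m).filter fun r => Nat.beq (dropBit r) 0 || !(pathMasks.any fun p => Nat.beq p r)

lemma noFour_all : (edgeMasks.all fun x => edgeMasks.all fun y => Nat.beq x y ||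
    noFour (restMasks' (x ||| y))) = true := by
  decide +kernel

lemma noFour_false (R : List ℕ) (X₁ X₂ X₃ X₄ : Finset (Sym2 (Fin 5)))
    (m1 : mask X₁ ∈ R) (m2 : mask X₂ ∈ R) (m3 : mask X₃ ∈ R)
    (m4 : mask X₄ ∈ R) (h12 : Disjoint X₁ X₂) (h13 : Disjoint X₁ X₃)
    (h23 : Disjoint X₂ X₃) (h14 : Disjoint X₁ X₄) (h24 : Disjoint X₂ X₄)
    (h34 : Disjoint X₃ X₄) : noFour R = false := by
  rw [Bool.eq_false_iff]
  intro h'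
  simp only [noFour, List.all_eq_true, Bool.or_eq_true, Bool.not_eq_true', Bool.eq_false_iff,
    ne_eq, Nat.beq_eq] at h'
  have g12 : mask X₁ &&& mask X₂ = 0 := (disjoint_iff_mask _ _).1 h12
  have g3 : (mask X₁ ||| mask X₂) &&& mask X₃ = 0 := by
    rw [← mask_union, ← disjoint_iff_mask, Finset.disjoint_union_left]
    exact ⟨h13, h23⟩
  have g4 : (mask X₁ ||| mask X₂ ||| mask X₃) &&& mask X₄ = 0 := by
    rw [← mask_union, ← mask_union, ← disjoint_iff_mask, Finset.disjoint_union_left,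
      Finset.disjoint_union_left]
    exact ⟨⟨h14, h24⟩, h34⟩
  rcases h' _ m1 _ m2 with h | h
  · exact h g12
  rcases h _ m3 with h | h
  · exact h g3
  exact h _ m4 g4

/-- Five disjoint pairs of edges cannot pairwise contain cycles. -/
lemma core2 (F : Fin 5 → Finset (Sym2 (Fin 5))) (hc : ∀ i, (F i).card = 2)
    (hd : ∀ i, ∀ e ∈ F i, ¬ e.IsDiag) (hdis : ∀ i j, i ≠ j → Disjoint (F i) (F j))
    (hcy : ∀ i j, i ≠ j →
      ¬ (fromEdgeSet ((F i : Set (Sym2 (Fin 5))) ∪ (F j : Set _))).IsAcyclic) : False := by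
  have hX : ∀ i j, i ≠ j → ∃ X ∈ rests (F i), X ⊆ F j := fun i j hij =>
    exists_rest (F i) (F j) (hc i).le (hc j).le (hcy i j hij)
  have n : ∀ i : Fin 5, i ≠ i + 1 ∧ i ≠ i + 2 ∧ i ≠ i + 3 ∧ i ≠ i + 4 ∧ i + 1 ≠ i + 2 ∧
    i + 1 ≠ i + 3 ∧ i + 2 ≠ i + 3 ∧ i + 1 ≠ i + 4 ∧ i + 2 ≠ i + 4 ∧ i + 3 ≠ i + 4 := by decide
  have step : ∀ (R : List ℕ) (i : Fin 5),
      (∀ j, i ≠ j → ∀ X ∈ rests (F i), X ⊆ F j → mask X ∈ R) → noFour R = false := by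
    intro R i hR
    obtain ⟨n1, n2, n3, n4, n12, n13, n23, n14, n24, n34⟩ := n i
    obtain ⟨X₁, m1, s1⟩ := hX i _ n1
    obtain ⟨X₂, m2, s2⟩ := hX i _ n2
    obtain ⟨X₃, m3, s3⟩ := hX i _ n3
    obtain ⟨X₄, m4, s4⟩ := hX i _ n4
    exact noFour_false R X₁ X₂ X₃ X₄ (hR _ n1 _ m1 s1) (hR _ n2 _ m2 s2) (hR _ n3 _ m3 s3)
      (hR _ n4 _ m4 s4) ((hdis _ _ n12).mono s1 s2) ((hdis _ _ n13).mono s1 s3)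
      ((hdis _ _ n23).mono s2 s3) ((hdis _ _ n14).mono s1 s4)
      ((hdis _ _ n24).mono s2 s4) ((hdis _ _ n34).mono s3 s4)
  have first : ∀ i, noFour (restMasks (mask (F i))) = false := fun i =>
    step _ i (fun _ _ X m _ => mask_rest _ X m)
  have second : noFour (restMasks' (mask (F 0))) = false := by
    refine step _ 0 (fun j _ X m s => ?_)
    rw [restMasks', List.mem_filter]
    refine ⟨mask_rest _ X m, ?_⟩
    rw [Bool.or_eq_true, Nat.beq_eq]
    by_cases h1 : X.card ≤ 1
    · exact Or.inl (small_mask_one X h1)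
    · right
      have : X = F j := Finset.eq_of_subset_of_card_le s (by rw [hc j]; omega)
      rw [this, Bool.not_eq_true', Bool.eq_false_iff]
      intro hp
      obtain ⟨p, hp, he⟩ := List.any_eq_true.1 hp
      rw [Nat.beq_eq] at he
      have h2 := List.all_eq_true.1 noFour_path p hp
      rw [he, first j] at h2
      exact Bool.noConfusion h2
  obtain ⟨x, y, hxy, h0⟩ := Finset.card_eq_two.1 (hc 0)
  have hx := hd 0 x (by simp [h0])
  have hy := hd 0 y (by simp [h0])
  have h := noFour_all
  simp only [List.all_eq_true, Bool.or_eq_true, Nat.beq_eq] at h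
  have hne : 2 ^ idx x ≠ 2 ^ idx y := fun he =>
    hxy (idx_inj x y (Nat.pow_right_injective (le_refl 2) he))
  have h' := (h _ (mask_edge x hx) _ (mask_edge y hy)).resolve_left hne
  rw [h0, mask_insert, mask_singleton, h'] at second
  exact Bool.noConfusion second

lemma core1 (x : Sym2 (Fin 5)) (X : Finset (Sym2 (Fin 5))) (h : X ∈ rests {x}) :
    X.card = 2 := by
  simp only [rests, List.mem_filter, List.mem_map, decide_eq_true_eq] at h
  obtain ⟨⟨T, hT, rfl⟩, hc⟩ := h
  have h1 := shortCycles_card T hT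
  have h2 := Finset.le_card_sdiff {x} T
  rw [Finset.card_singleton] at h2
  omega

/-- Vertex triples. -/
def triples : List (Fin 5 × Fin 5 × Fin 5) :=
  [(0, 1, 2), (0, 1, 3), (0, 1, 4), (0, 2, 3), (0, 2, 4), (0, 3, 4),
   (1, 2, 3), (1, 2, 4), (1, 3, 4), (2, 3, 4)]

lemma triples_ne : ∀ t ∈ triples, t.1 ≠ t.2.1 ∧ t.2.1 ≠ t.2.2 ∧ t.2.2 ≠ t.1 := by
  decide +kernel

/-- Masks of the triangles. -/
def triMasks : List ℕ := [134, 266, 530, 8204, 16404, 524312, 8576, 17024, 525056, 548864]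

lemma map_triMask : triples.map (fun t => mask (triE t.1 t.2.1 t.2.2)) = triMasks := by
  simp only [triples, triE, List.map, mask_insert, mask_singleton]
  decide +kernel

lemma tri_left : (edgeMasks.all fun x => (restMasks x).all fun a => (restMasks x).all fun b =>
    !(Nat.beq (a &&& b) 0) || (restMasks x).all fun c => !(Nat.beq ((a ||| b) &&& c) 0) ||
      triMasks.any fun t => Nat.beq (t &&& (x ||| a ||| b ||| c)) 0) = true := by
  decide +kernel

lemma core1' (x : Sym2 (Fin 5)) (hx : ¬ x.IsDiag) (X₁ X₂ X₃ : Finset (Sym2 (Fin 5)))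
    (m1 : X₁ ∈ rests {x}) (m2 : X₂ ∈ rests {x}) (m3 : X₃ ∈ rests {x})
    (h12 : Disjoint X₁ X₂) (h13 : Disjoint X₁ X₃) (h23 : Disjoint X₂ X₃) :
    ∃ a b c : Fin 5, a ≠ b ∧ b ≠ c ∧ c ≠ a ∧
      Disjoint (triE a b c) ({x} ∪ X₁ ∪ X₂ ∪ X₃) := by
  have h := tri_left
  simp only [List.all_eq_true, List.any_eq_true, Bool.or_eq_true, Bool.not_eq_true',
    Bool.eq_false_iff, ne_eq, Nat.beq_eq] at h
  have h' := h _ (mask_edge x hx)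
  rw [← mask_singleton] at h'
  have g12 : mask X₁ &&& mask X₂ = 0 := (disjoint_iff_mask _ _).1 h12
  have g3 : (mask X₁ ||| mask X₂) &&& mask X₃ = 0 := by
    rw [← mask_union, ← disjoint_iff_mask, Finset.disjoint_union_left]
    exact ⟨h13, h23⟩
  obtain ⟨t, ht, h0⟩ := ((h' _ (mask_rest _ _ m1) _ (mask_rest _ _ m2)).resolve_left
    (not_not.2 g12) _ (mask_rest _ _ m3)).resolve_left (not_not.2 g3)
  rw [← map_triMask] at ht
  obtain ⟨⟨u, v, w⟩, hm, rfl⟩ := List.mem_map.1 ht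
  obtain ⟨h1, h2, h3⟩ := triples_ne _ hm
  refine ⟨u, v, w, h1, h2, h3, ?_⟩
  rw [disjoint_iff_mask, mask_union, mask_union, mask_union]
  exact h0

lemma fin5_rest : ∀ i a b c : Fin 5, i ≠ a → i ≠ b → i ≠ c → a ≠ b → a ≠ c → b ≠ c →
    ∃ d, ∀ j, j = i ∨ j = a ∨ j = b ∨ j = c ∨ j = d := by
  decide +kernel

lemma upper (k : ℕ) (P : Fin k → Set (Sym2 (Fin 5)))
    (hP : IsCompleteForestPartition (⊤ : SimpleGraph (Fin 5)) k P) : k ≤ 4 := by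
  classical
  by_contra hk
  obtain ⟨F, rfl⟩ : ∃ F : Fin k → Finset (Sym2 (Fin 5)), P = fun i => (F i : Set _) :=
    ⟨fun i => (P i).toFinset, by ext; simp⟩
  obtain ⟨hne, hdis, hun, hac, hcy⟩ := hP
  simp only [Finset.coe_nonempty, Finset.disjoint_coe] at hne hdis
  have hmem : ∀ e : Sym2 (Fin 5), (∃ i, e ∈ F i) ↔ ¬ e.IsDiag := by
    intro e
    have := Set.ext_iff.1 hun e
    simpa using this
  have hsum : ∑ i, (F i).card = 10 := by
    rw [← Finset.card_biUnion (fun i _ j _ h => hdis i j h)]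
    have : Finset.univ.biUnion F = Finset.univ.filter (fun e : Sym2 (Fin 5) => ¬ e.IsDiag) := by
      ext e
      simpa using hmem e
    rw [this]
    decide +kernel
  have hpos : ∀ i, 1 ≤ (F i).card := fun i => Finset.card_pos.2 (hne i)
  have hpair : ∀ i j, i ≠ j → 3 ≤ (F i).card + (F j).card := by
    intro i j hij
    by_contra hlt
    have hc := Finset.card_union_le (F i) (F j)
    obtain ⟨T, hT, hs⟩ := exists_shortCycle (F i ∪ F j) (by omega) (by simpa using hcy i j hij)
    have := shortCycles_card T hT
    have := Finset.card_le_card hs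
    omega
  by_cases hall : ∀ i, 2 ≤ (F i).card
  · have hk5 : k = 5 := by
      have := Finset.sum_le_sum (s := Finset.univ) (fun i _ => hall i)
      simp [hsum] at this
      omega
    subst hk5
    rw [Fin.sum_univ_five] at hsum
    have a0 := hall 0
    have a1 := hall 1
    have a2 := hall 2
    have a3 := hall 3
    have a4 := hall 4
    refine core2 F ?_ (fun i e he => (hmem e).1 ⟨i, he⟩) hdis hcy
    intro i
    fin_cases i <;> simp only [Fin.zero_eta, Fin.mk_one, Fin.reduceFinMk] <;> omega
  · push Not at hall
    obtain ⟨i, hi⟩ := hall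
    have hi1 : (F i).card = 1 := by have := hpos i; omega
    have ho : ∀ j, j ≠ i → 2 ≤ (F j).card := fun j hj => by
      have := hpair j i hj
      omega
    have hs9 : ∑ j ∈ Finset.univ.erase i, (F j).card = 9 := by
      have := Finset.add_sum_erase Finset.univ (fun j => (F j).card) (Finset.mem_univ i)
      omega
    have hk5 : k = 5 := by
      have := Finset.sum_le_sum (s := Finset.univ.erase i) (f := fun _ => 2)
        (g := fun j => (F j).card) (fun j hj => ho j (Finset.ne_of_mem_erase hj))
      rw [hs9] at this
      simp [Finset.card_erase_of_mem] at this
      omega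
    subst hk5
    have hJ : 2 < ((Finset.univ.erase i).filter (fun j => (F j).card = 2)).card := by
      have hle : ∑ j ∈ Finset.univ.erase i, (3 - if (F j).card = 2 then 1 else 0) ≤ 9 := by
        rw [← hs9]
        apply Finset.sum_le_sum
        intro j hj
        have := ho j (Finset.ne_of_mem_erase hj)
        split_ifs <;> omega
      have heq : ∑ j ∈ Finset.univ.erase i, (3 - if (F j).card = 2 then 1 else 0)
          + ∑ j ∈ Finset.univ.erase i, (if (F j).card = 2 then 1 else 0) = 12 := by
        rw [← Finset.sum_add_distrib]
        rw [Finset.sum_congr rfl (g := fun _ => 3)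
          (by intro j _; split_ifs <;> rfl)]
        simp [Finset.card_erase_of_mem]
      rw [Finset.card_filter]
      omega
    obtain ⟨a, ha, b, hb, c, hc, hab, hac', hbc⟩ := Finset.two_lt_card.1 hJ
    simp only [Finset.mem_filter, Finset.mem_erase, Finset.mem_univ, and_true] at ha hb hc
    obtain ⟨x, hFi⟩ := Finset.card_eq_one.1 hi1
    have hx := (hmem x).1 ⟨i, by simp [hFi]⟩
    have get : ∀ j, j ≠ i → (F j).card = 2 → F j ∈ rests {x} := by
      intro j hj h2
      obtain ⟨X, m, s⟩ := exists_rest (F i) (F j) (by omega) (by omega) (hcy i j hj.symm)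
      rw [hFi] at m
      have := core1 x X m
      rwa [← Finset.eq_of_subset_of_card_le s (by omega)]
    obtain ⟨d, hd⟩ := fin5_rest i a b c ha.1.symm hb.1.symm hc.1.symm hab hac' hbc
    obtain ⟨u, v, w, h1, h2, h3, h4⟩ := core1' x hx _ _ _ (get a ha.1 ha.2) (get b hb.1 hb.2)
      (get c hc.1 hc.2) (hdis a b hab) (hdis a c hac') (hdis b c hbc)
    refine tri_not_acyclic _ u v w h1 h2 h3 ?_ (hac d)
    have hnd : ∀ e ∈ triE u v w, ¬ e.IsDiag := by
      intro e he
      simp only [triE, Finset.mem_insert, Finset.mem_singleton] at he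
      rcases he with rfl | rfl | rfl <;> simpa
    intro e he
    have he' : e ∈ triE u v w := he
    obtain ⟨j, hj⟩ := (hmem e).2 (hnd e he')
    have hn := Finset.disjoint_left.1 h4 he'
    rw [← hFi] at hn
    simp only [Finset.mem_union, not_or] at hn
    rcases hd j with rfl | rfl | rfl | rfl | rfl
    · exact absurd hj hn.1.1.1
    · exact absurd hj hn.1.1.2
    · exact absurd hj hn.1.2
    · exact absurd hj hn.2
    · exact hj

/-- The achromatic arboricity of `K_5` equals `4`. -/
theorem achromaticArboricity_K5 :
    achromaticArboricity (⊤ : SimpleGraph (Fin 5)) = 4 := by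
  apply IsGreatest.csSup_eq
  exact ⟨⟨_, wit_ok⟩, fun k ⟨P, hP⟩ => upper k P hP⟩
end

section
/- The achromatic arboricity of the complete graph K_6 equals 6. -/
namespace AchromaticK6

open SimpleGraph

/-- Bitmask of the endpoints of an edge (its boundary over the two-element field). -/
def code : Sym2 (Fin 6) → ℕ :=
  Sym2.lift ⟨fun a b => 2 ^ a.val ^^^ 2 ^ b.val, fun _ _ => Nat.xor_comm _ _⟩

/-- The xor of all boundaries of a set of edges. -/
def bd (T : Finset (Sym2 (Fin 6))) : ℕ := T.fold (· ^^^ ·) 0 code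

lemma walk_xor {G : SimpleGraph (Fin 6)} {u v : Fin 6} (p : G.Walk u v) :
    (p.edges.map code).foldr (· ^^^ ·) 0 = 2 ^ u.val ^^^ 2 ^ v.val := by
  induction p with
  | nil => simp
  | @cons a b c h p ih =>
    simp only [Walk.edges_cons, List.map_cons, List.foldr_cons, ih]
    change (2 ^ a.val ^^^ 2 ^ b.val) ^^^ (2 ^ b.val ^^^ 2 ^ c.val) = _
    rw [Nat.xor_assoc, ← Nat.xor_assoc (2 ^ b.val)]
    simp

/-- A graph with a cycle has an even set of at least three edges. -/
lemma exists_even {S : Set (Sym2 (Fin 6))} (h : ¬ (fromEdgeSet S).IsAcyclic) :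
    ∃ T : Finset (Sym2 (Fin 6)), (T : Set (Sym2 (Fin 6))) ⊆ S ∧ 3 ≤ T.card ∧ bd T = 0 := by
  simp only [IsAcyclic, not_forall, not_not] at h
  obtain ⟨v, c, hc⟩ := h
  refine ⟨c.edges.toFinset, ?_, ?_, ?_⟩
  · intro e he
    have := c.edges_subset_edgeSet (by simpa using he)
    rw [edgeSet_fromEdgeSet] at this
    exact this.1
  · rw [List.toFinset_card_of_nodup hc.edges_nodup, Walk.length_edges]
    exact hc.three_le_length
  · have := walk_xor c
    rw [Nat.xor_self] at this
    rw [bd, Finset.fold, List.toFinset_val, List.Nodup.dedup hc.edges_nodup,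
      Multiset.map_coe, Multiset.coe_fold_r]
    exact this

lemma not_acyclic3 {V : Type*} {S : Set (Sym2 V)} {a b c : V} (hab : a ≠ b) (hac : a ≠ c)
    (hbc : b ≠ c) (h1 : s(a, b) ∈ S) (h2 : s(b, c) ∈ S) (h3 : s(c, a) ∈ S) :
    ¬ (fromEdgeSet S).IsAcyclic := by
  intro h
  have e1 : (fromEdgeSet S).Adj a b := ⟨h1, hab⟩
  have e2 : (fromEdgeSet S).Adj b c := ⟨h2, hbc⟩
  have e3 : (fromEdgeSet S).Adj c a := ⟨h3, hac.symm⟩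
  refine h (.cons e1 (.cons e2 (.cons e3 .nil))) ?_
  simp [Walk.cons_isCycle_iff]
  grind

lemma not_acyclic4 {V : Type*} {S : Set (Sym2 V)} {a b c d : V} (hn : [a, b, c, d].Nodup)
    (h1 : s(a, b) ∈ S) (h2 : s(b, c) ∈ S) (h3 : s(c, d) ∈ S) (h4 : s(d, a) ∈ S) :
    ¬ (fromEdgeSet S).IsAcyclic := by
  intro h
  simp at hn
  have e1 : (fromEdgeSet S).Adj a b := ⟨h1, by grind⟩
  have e2 : (fromEdgeSet S).Adj b c := ⟨h2, by grind⟩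
  have e3 : (fromEdgeSet S).Adj c d := ⟨h3, by grind⟩
  have e4 : (fromEdgeSet S).Adj d a := ⟨h4, by grind⟩
  refine h (.cons e1 (.cons e2 (.cons e3 (.cons e4 .nil)))) ?_
  simp [Walk.cons_isCycle_iff]
  grind

lemma not_acyclic5 {V : Type*} {S : Set (Sym2 V)} {a b c d e : V} (hn : [a, b, c, d, e].Nodup)
    (h1 : s(a, b) ∈ S) (h2 : s(b, c) ∈ S) (h3 : s(c, d) ∈ S) (h4 : s(d, e) ∈ S)
    (h5 : s(e, a) ∈ S) :
    ¬ (fromEdgeSet S).IsAcyclic := by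
  intro h
  simp at hn
  have e1 : (fromEdgeSet S).Adj a b := ⟨h1, by grind⟩
  have e2 : (fromEdgeSet S).Adj b c := ⟨h2, by grind⟩
  have e3 : (fromEdgeSet S).Adj c d := ⟨h3, by grind⟩
  have e4 : (fromEdgeSet S).Adj d e := ⟨h4, by grind⟩
  have e5 : (fromEdgeSet S).Adj e a := ⟨h5, by grind⟩
  refine h (.cons e1 (.cons e2 (.cons e3 (.cons e4 (.cons e5 .nil))))) ?_
  simp [Walk.cons_isCycle_iff]
  grind

/-- The optimal partition of the edges of `K_6`. -/
def parts : Fin 6 → Finset (Sym2 (Fin 6)) :=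
  ![{s(0, 1), s(0, 2), s(0, 3)}, {s(0, 4), s(0, 5), s(1, 4)}, {s(1, 2), s(2, 5)},
    {s(1, 3), s(3, 5)}, {s(1, 5), s(2, 3)}, {s(2, 4), s(3, 4), s(4, 5)}]

lemma parts_cycle : ∀ i j : Fin 6, i < j →
    ¬ (fromEdgeSet ((parts i : Set (Sym2 (Fin 6))) ∪ parts j)).IsAcyclic := by
  have key3 : ∀ (i j : Fin 6) (a b c : Fin 6), (a ≠ b ∧ a ≠ c ∧ b ≠ c ∧
      s(a, b) ∈ parts i ∪ parts j ∧ s(b, c) ∈ parts i ∪ parts j ∧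
      s(c, a) ∈ parts i ∪ parts j) →
      ¬ (fromEdgeSet ((parts i : Set (Sym2 (Fin 6))) ∪ parts j)).IsAcyclic := by
    rintro i j a b c ⟨h1, h2, h3, h4, h5, h6⟩
    rw [← Finset.coe_union]
    exact not_acyclic3 h1 h2 h3 h4 h5 h6
  have key4 : ∀ (i j : Fin 6) (a b c d : Fin 6), ([a, b, c, d].Nodup ∧
      s(a, b) ∈ parts i ∪ parts j ∧ s(b, c) ∈ parts i ∪ parts j ∧
      s(c, d) ∈ parts i ∪ parts j ∧ s(d, a) ∈ parts i ∪ parts j) →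
      ¬ (fromEdgeSet ((parts i : Set (Sym2 (Fin 6))) ∪ parts j)).IsAcyclic := by
    rintro i j a b c d ⟨h1, h2, h3, h4, h5⟩
    rw [← Finset.coe_union]
    exact not_acyclic4 h1 h2 h3 h4 h5
  have key5 : ∀ (i j : Fin 6) (a b c d e : Fin 6), ([a, b, c, d, e].Nodup ∧
      s(a, b) ∈ parts i ∪ parts j ∧ s(b, c) ∈ parts i ∪ parts j ∧
      s(c, d) ∈ parts i ∪ parts j ∧ s(d, e) ∈ parts i ∪ parts j ∧
      s(e, a) ∈ parts i ∪ parts j) →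
      ¬ (fromEdgeSet ((parts i : Set (Sym2 (Fin 6))) ∪ parts j)).IsAcyclic := by
    rintro i j a b c d e ⟨h1, h2, h3, h4, h5, h6⟩
    rw [← Finset.coe_union]
    exact not_acyclic5 h1 h2 h3 h4 h5 h6
  intro i j hij
  fin_cases i <;> fin_cases j <;> first | exact absurd hij (by decide) | skip
  · exact key3 0 1 0 1 4 (by decide)
  · exact key3 0 2 0 1 2 (by decide)
  · exact key3 0 3 0 1 3 (by decide)
  · exact key3 0 4 0 2 3 (by decide)
  · exact key4 0 5 0 2 4 3 (by decide)
  · exact key5 1 2 0 4 1 2 5 (by decide)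
  · exact key5 1 3 0 4 1 3 5 (by decide)
  · exact key4 1 4 0 4 1 5 (by decide)
  · exact key3 1 5 0 4 5 (by decide)
  · exact key4 2 3 1 2 5 3 (by decide)
  · exact key3 2 4 1 2 5 (by decide)
  · exact key3 2 5 2 4 5 (by decide)
  · exact key3 3 4 1 3 5 (by decide)
  · exact key3 3 5 3 4 5 (by decide)
  · exact key3 4 5 2 3 4 (by decide)

lemma lower : IsCompleteForestPartition (⊤ : SimpleGraph (Fin 6)) 6
    (fun i => (parts i : Set (Sym2 (Fin 6)))) := by
  refine ⟨?_, ?_, ?_, ?_, ?_⟩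
  · intro i
    have : ∀ i, (parts i).Nonempty := by decide
    exact_mod_cast this i
  · intro i j hij
    have : ∀ i j, i ≠ j → Disjoint (parts i) (parts j) := by decide +kernel
    exact Finset.disjoint_coe.2 (this i j hij)
  · ext e
    have : ∀ e : Sym2 (Fin 6), (∃ i, e ∈ parts i) ↔ ¬ e.IsDiag := by decide +kernel
    simpa [Set.mem_iUnion] using this e
  · intro i
    by_contra h
    obtain ⟨T, h1, h2, h3⟩ := exists_even h
    have hc : ∀ i, (parts i).card ≤ 3 := by decide
    have hb : ∀ i, bd (parts i) ≠ 0 := by decide +kernel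
    have hT : T = parts i :=
      Finset.eq_of_subset_of_card_le (by simpa using h1) ((hc i).trans h2)
    exact hb i (hT ▸ h3)
  · intro i j hij
    rcases lt_or_gt_of_ne hij with h | h
    · exact parts_cycle i j h
    · have := parts_cycle j i h
      rwa [Set.union_comm] at this

/-- If `{e}` is a class then every other class has an edge at each end of `e`. -/
lemma singleton_class {S : Set (Sym2 (Fin 6))} {u v : Fin 6}
    (hS : (fromEdgeSet S).IsAcyclic) (h : ¬ (fromEdgeSet ({s(u, v)} ∪ S)).IsAcyclic) :
    ∃ w, w ≠ v ∧ w ≠ u ∧ s(u, w) ∈ S := by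
  simp only [IsAcyclic, not_forall, not_not] at h
  obtain ⟨x, c, hc⟩ := h
  have hmem : s(u, v) ∈ c.edges := by
    by_contra hne
    have ht : ∀ e ∈ c.edges, e ∈ (fromEdgeSet S).edgeSet := by
      intro e he
      have := c.edges_subset_edgeSet he
      rw [edgeSet_fromEdgeSet] at this ⊢
      refine ⟨?_, this.2⟩
      rcases this.1 with h | h
      · rw [Set.mem_singleton_iff] at h
        exact absurd (h ▸ he) hne
      · exact h
    exact hS (c.transfer _ ht) (hc.transfer ht)
  have hu : u ∈ c.support := c.fst_mem_support_of_mem_edges hmem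
  have h2 := hc.ncard_neighborSet_toSubgraph_eq_two hu
  obtain ⟨w, hw, hwv⟩ := Set.exists_ne_of_one_lt_ncard (s := c.toSubgraph.neighborSet u) (by omega) v
  have hadj : (c.toSubgraph).Adj u w := hw
  have hA := hadj.adj_sub
  refine ⟨w, hwv, hA.ne', ?_⟩
  rcases hA.1 with h | h
  · exfalso
    have : s(u, w) = s(u, v) := h
    simp at this
    exact hwv (by grind)
  · exact h

/-- Compatibility of two classes of size two, on boundary codes. -/
def compat (p q : ℕ × ℕ) : Bool :=
  (p.1 != q.1 && p.1 != q.2 && p.2 != q.1 && p.2 != q.2) &&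
  (p.1 ^^^ p.2 ^^^ q.1 ^^^ q.2 == 0 || p.1 ^^^ p.2 ^^^ q.1 == 0 || p.1 ^^^ p.2 ^^^ q.2 == 0 ||
    p.1 ^^^ q.1 ^^^ q.2 == 0 || p.2 ^^^ q.1 ^^^ q.2 == 0)

def edgeCodes : List ℕ := [3, 5, 9, 17, 33, 6, 10, 18, 34, 12, 20, 36, 24, 40, 48]

def pairCodes : List (ℕ × ℕ) :=
  (edgeCodes.flatMap fun a => edgeCodes.map fun b => (a, b)).filter fun p => p.1 < p.2

/-- There is no clique of size `n` in the list `l` (searching ordered cliques). -/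
def noClique : ℕ → List (ℕ × ℕ) → Bool
  | 0, _ => false
  | n + 1, l => l.all fun p => noClique n (l.filter (compat p))

lemma noClique_spec (n : ℕ) : ∀ (l : List (ℕ × ℕ)), noClique n l = true →
    ∀ f : Fin n → ℕ × ℕ, (∀ i, f i ∈ l) → (∀ i j, i ≠ j → compat (f i) (f j) = true) → False := by
  induction n with
  | zero => intro l h; simp [noClique] at h
  | succ n ih =>
    intro l h f hf hc
    simp only [noClique, List.all_eq_true] at h
    refine ih _ (h (f 0) (hf 0)) (fun i => f i.succ) ?_ ?_
    · intro i
      exact List.mem_filter.2 ⟨hf _, hc _ _ (Fin.succ_ne_zero i).symm⟩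
    · intro i j hij
      exact hc _ _ (by simpa using hij)

lemma noClique6 : noClique 6 pairCodes = true := by decide +kernel

lemma code_mem : ∀ e : Sym2 (Fin 6), ¬ e.IsDiag → code e ∈ edgeCodes := by decide +kernel

lemma code_inj : ∀ e f : Sym2 (Fin 6), ¬ e.IsDiag → ¬ f.IsDiag → code e = code f → e = f := by
  decide +kernel

lemma exists_ordered {T : Finset (Sym2 (Fin 6))} (hT : T.card = 2) (hd : ∀ e ∈ T, ¬ e.IsDiag) :
    ∃ e f, T = {e, f} ∧ code e < code f := by
  obtain ⟨e, f, hne, rfl⟩ := Finset.card_eq_two.1 hT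
  have he := hd e (by simp)
  have hf := hd f (by simp)
  rcases lt_trichotomy (code e) (code f) with h | h | h
  · exact ⟨e, f, rfl, h⟩
  · exact absurd (code_inj e f he hf h) hne
  · exact ⟨f, e, Finset.pair_comm _ _, h⟩

lemma compat_of {e₁ e₂ f₁ f₂ : Sym2 (Fin 6)} (he : code e₁ < code e₂) (hf : code f₁ < code f₂)
    (h₁ : code e₁ ≠ code f₁) (h₂ : code e₁ ≠ code f₂) (h₃ : code e₂ ≠ code f₁)
    (h₄ : code e₂ ≠ code f₂)
    (h : ¬ (fromEdgeSet (({e₁, e₂} ∪ {f₁, f₂} : Set (Sym2 (Fin 6))))).IsAcyclic) :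
    compat (code e₁, code e₂) (code f₁, code f₂) = true := by
  obtain ⟨T, h1, h2, h3⟩ := exists_even h
  have n1 : e₁ ≠ e₂ := fun h => by simp [h] at he
  have n2 : f₁ ≠ f₂ := fun h => by simp [h] at hf
  have n3 : e₁ ≠ f₁ := fun h => h₁ (by rw [h])
  have n4 : e₁ ≠ f₂ := fun h => h₂ (by rw [h])
  have n5 : e₂ ≠ f₁ := fun h => h₃ (by rw [h])
  have n6 : e₂ ≠ f₂ := fun h => h₄ (by rw [h])
  have hsub : T ⊆ {e₁, e₂, f₁, f₂} := by
    intro x hx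
    have := h1 hx
    simp at this ⊢
    tauto
  have hT : T = {e₁, e₂, f₁, f₂} ∨ T = {e₁, e₂, f₁} ∨ T = {e₁, e₂, f₂} ∨ T = {e₁, f₁, f₂} ∨
      T = {e₂, f₁, f₂} := by
    by_cases a : e₁ ∈ T
    · by_cases b : e₂ ∈ T
      · by_cases c : f₁ ∈ T
        · by_cases d : f₂ ∈ T
          · left; grind
          · right; left; grind
        · right; right; left
          apply Finset.eq_of_subset_of_card_le (by grind)
          exact Finset.card_le_three.trans h2
      · right; right; right; left
        apply Finset.eq_of_subset_of_card_le (by grind)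
        exact Finset.card_le_three.trans h2
    · right; right; right; right
      apply Finset.eq_of_subset_of_card_le (by grind)
      exact Finset.card_le_three.trans h2
  simp only [compat, Bool.and_eq_true, Bool.or_eq_true, bne_iff_ne, beq_iff_eq]
  refine ⟨⟨⟨⟨h₁, h₂⟩, h₃⟩, h₄⟩, ?_⟩
  rcases hT with rfl | rfl | rfl | rfl | rfl <;>
    simp [bd, Finset.fold_insert, n1, n2, n3, n4, n5, n6, ← Nat.xor_assoc] at h3 <;> simp [h3]

lemma upper {k : ℕ} {P : Fin k → Set (Sym2 (Fin 6))}
    (h : IsCompleteForestPartition (⊤ : SimpleGraph (Fin 6)) k P) : k ≤ 6 := by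
  classical
  obtain ⟨hne, hdis, hun, hac, hcy⟩ := h
  by_contra hk
  push Not at hk
  have hdiag : ∀ i, ∀ e ∈ P i, ¬ e.IsDiag := by
    intro i e he
    have : e ∈ (⊤ : SimpleGraph (Fin 6)).edgeSet := hun ▸ Set.mem_iUnion.2 ⟨i, he⟩
    simpa using this
  let Q : Fin k → Finset (Sym2 (Fin 6)) := fun i => (P i).toFinset
  have hQ : ∀ i e, e ∈ Q i ↔ e ∈ P i := by simp [Q]
  have hQd : ∀ i j, i ≠ j → Disjoint (Q i) (Q j) := by
    intro i j hij
    simpa [Q] using hdis i j hij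
  have hsum : ∑ i, (Q i).card = 15 := by
    rw [← Finset.card_biUnion (fun i _ j _ hij => hQd i j hij)]
    have : Finset.univ.biUnion Q = Finset.univ.filter (fun e : Sym2 (Fin 6) => ¬ e.IsDiag) := by
      ext e
      have : e ∈ (⋃ i, P i) ↔ e ∈ (⊤ : SimpleGraph (Fin 6)).edgeSet := by rw [hun]
      simpa [hQ] using this
    rw [this]
    decide +kernel
  have hpos : ∀ i, 1 ≤ (Q i).card := by
    intro i
    obtain ⟨e, he⟩ := hne i
    exact Finset.card_pos.2 ⟨e, (hQ i e).2 he⟩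
  -- no singleton class
  have htwo : ∀ i, 2 ≤ (Q i).card := by
    intro i
    by_contra hlt
    have h1 : (Q i).card = 1 := by have := hpos i; omega
    obtain ⟨e, he⟩ := Finset.card_eq_one.1 h1
    have hPi : P i = {e} := by
      ext x
      rw [← hQ, he]; simp
    induction e using Sym2.ind with
    | _ u v =>
    have huv : u ≠ v := by
      have := hdiag i s(u, v) (by simp [hPi])
      simpa using this
    have hw : ∀ j, ∃ w, j ≠ i → w ≠ v ∧ w ≠ u ∧ s(u, w) ∈ P j := by
      intro j
      by_cases hj : j = i
      · exact ⟨u, fun h => absurd hj h⟩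
      · obtain ⟨w, hw⟩ := singleton_class (hac j) (hPi ▸ hcy i j (Ne.symm hj))
        exact ⟨w, fun _ => hw⟩
    choose w hw using hw
    have hcard : (Finset.univ.erase i).card ≤ (({u, v} : Finset (Fin 6))ᶜ).card := by
      apply Finset.card_le_card_of_injOn w
      · intro j hj
        have := hw j (by simpa using hj)
        simp [this.1, this.2.1]
      · intro a ha b hb hab
        by_contra hne
        have h1 := (hw a (by simpa using ha)).2.2
        have h2 := (hw b (by simpa using hb)).2.2
        rw [hab] at h1
        exact Set.disjoint_left.1 (hdis a b hne) h1 h2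
    rw [Finset.card_erase_of_mem (Finset.mem_univ _), Finset.card_compl,
      Finset.card_pair huv] at hcard
    simp at hcard
    omega
  -- at least six classes of size two
  have hcount : 6 ≤ (Finset.univ.filter fun i => (Q i).card = 2).card := by
    have hb : ∑ i : Fin k, 3 ≤ ∑ i : Fin k, ((Q i).card + if (Q i).card = 2 then 1 else 0) := by
      apply Finset.sum_le_sum
      intro i _
      have := htwo i
      split_ifs <;> omega
    rw [Finset.sum_add_distrib, hsum, ← Finset.card_filter] at hb
    simp at hb
    omega
  obtain ⟨I, hI, hI6⟩ := Finset.exists_subset_card_eq hcount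
  let g := I.orderEmbOfFin hI6
  have hg : ∀ a, (Q (g a)).card = 2 := fun a =>
    (Finset.mem_filter.1 (hI (I.orderEmbOfFin_mem hI6 a))).2
  have hex : ∀ a, ∃ e f, Q (g a) = {e, f} ∧ code e < code f := fun a =>
    exists_ordered (hg a) (fun e he => hdiag _ e ((hQ _ e).1 he))
  choose e f hef hlt using hex
  have hme : ∀ a, e a ∈ P (g a) := fun a => (hQ _ _).1 (by simp [hef])
  have hmf : ∀ a, f a ∈ P (g a) := fun a => (hQ _ _).1 (by simp [hef])
  refine noClique_spec 6 pairCodes noClique6 (fun a => (code (e a), code (f a))) ?_ ?_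
  · intro a
    simp only [pairCodes, List.mem_filter, List.mem_flatMap, List.mem_map, decide_eq_true_eq]
    exact ⟨⟨_, code_mem _ (hdiag _ _ (hme a)), _, code_mem _ (hdiag _ _ (hmf a)), rfl⟩, hlt a⟩
  · intro a b hab
    have hgab : g a ≠ g b := fun h => hab (g.injective h)
    have hne' : ∀ x y, x ∈ P (g a) → y ∈ P (g b) → code x ≠ code y := by
      intro x y hx hy hxy
      have := code_inj x y (hdiag _ _ hx) (hdiag _ _ hy) hxy
      subst this
      exact Set.disjoint_left.1 (hdis _ _ hgab) hx hy
    have hP : ∀ a, P (g a) = {e a, f a} := by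
      intro a
      ext x
      rw [← hQ, hef]; simp
    apply compat_of (hlt a) (hlt b) (hne' _ _ (hme a) (hme b)) (hne' _ _ (hme a) (hmf b))
      (hne' _ _ (hmf a) (hme b)) (hne' _ _ (hmf a) (hmf b))
    rw [← hP, ← hP]
    exact hcy _ _ hgab

end AchromaticK6

/-- The achromatic arboricity of `K_6` equals `6`. -/
theorem achromaticArboricity_K6 :
    achromaticArboricity (⊤ : SimpleGraph (Fin 6)) = 6 := by
  have hm : (6 : ℕ) ∈ {k | ∃ P : Fin k → Set (Sym2 (Fin 6)),
      IsCompleteForestPartition (⊤ : SimpleGraph (Fin 6)) k P} := ⟨_, AchromaticK6.lower⟩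
  have hg : IsGreatest {k | ∃ P : Fin k → Set (Sym2 (Fin 6)),
      IsCompleteForestPartition (⊤ : SimpleGraph (Fin 6)) k P} 6 := by
    refine ⟨hm, ?_⟩
    rintro k ⟨P, hP⟩
    exact AchromaticK6.upper hP
  exact hg.csSup_eq
end

section
/- The achromatic arboricity of the complete graph K_7 equals 7. -/
namespace K7Arb

abbrev E7 := Sym2 (Fin 7)

/-- Every edge end in `C` has another edge of `C` there. -/
def NoLeaf (C : Finset E7) : Prop := ∀ e ∈ C, ∀ v ∈ e, ∃ f ∈ C, f ≠ e ∧ v ∈ f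

lemma noLeaf_of_cycle {G : SimpleGraph (Fin 7)} {u : Fin 7} (p : G.Walk u u) (hp : p.IsCycle) :
    NoLeaf p.edges.toFinset := by
  intro e he v hv
  simp only [List.mem_toFinset] at he
  have hs : v ∈ p.support := SimpleGraph.Walk.mem_support_of_mem_edges he hv
  have h2 := hp.ncard_neighborSet_toSubgraph_eq_two hs
  obtain ⟨w, rfl⟩ := hv
  obtain ⟨x, y, hxy, hset⟩ := Set.ncard_eq_two.mp h2
  have hx : x ∈ p.toSubgraph.neighborSet v := by simp [hset]
  have hy : y ∈ p.toSubgraph.neighborSet v := by simp [hset]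
  simp only [SimpleGraph.Subgraph.mem_neighborSet, SimpleGraph.Walk.adj_toSubgraph_iff_mem_edges] at hx hy
  by_cases hxw : x = w
  · refine ⟨s(v, y), by simpa using hy, ?_, by simp⟩
    intro h
    have := Sym2.congr_right.mp h
    exact hxy (hxw.trans this.symm)
  · refine ⟨s(v, x), by simpa using hx, ?_, by simp⟩
    intro h
    exact hxw (Sym2.congr_right.mp h)

lemma exists_cyc {A B : Finset E7}
    (hA : (SimpleGraph.fromEdgeSet (A : Set E7)).IsAcyclic)
    (h : ¬ (SimpleGraph.fromEdgeSet ((A : Set E7) ∪ B)).IsAcyclic) :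
    ∃ C : Finset E7, C ⊆ A ∪ B ∧ NoLeaf C ∧ ∃ e ∈ C, e ∉ A := by
  unfold SimpleGraph.IsAcyclic at h
  push Not at h
  obtain ⟨u, p, hp⟩ := h
  have hsub : ∀ e ∈ p.edges, e ∈ A ∪ B ∧ ¬ e.IsDiag := by
    intro e he
    have := p.edges_subset_edgeSet he
    simp only [SimpleGraph.edgeSet_fromEdgeSet] at this
    simpa using this
  refine ⟨p.edges.toFinset, ?_, noLeaf_of_cycle p hp, ?_⟩
  · intro e he
    exact (hsub e (by simpa using he)).1
  · by_contra hcon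
    push Not at hcon
    have hq : ∀ e ∈ p.edges, e ∈ (SimpleGraph.fromEdgeSet (A : Set E7)).edgeSet := by
      intro e he
      simp only [SimpleGraph.edgeSet_fromEdgeSet]
      exact ⟨hcon e (by simpa using he), (hsub e he).2⟩
    exact hA _ (hp.transfer hq)

/-- degree of `v` in the edge set `A` -/
def deg (A : Finset E7) (v : Fin 7) : ℕ := (A.filter (v ∈ ·)).card

lemma deg_pos {A : Finset E7} {v : Fin 7} {e : E7} (he : e ∈ A) (hv : v ∈ e) : 1 ≤ deg A v :=
  Finset.card_pos.mpr ⟨e, by simp [he, hv]⟩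

lemma deg_two {A : Finset E7} {v : Fin 7} {e f : E7} (he : e ∈ A) (hv : v ∈ e)
    (hf : f ∈ A) (hv' : v ∈ f) (hef : e ≠ f) : 2 ≤ deg A v :=
  Finset.one_lt_card.mpr ⟨e, by simp [he, hv], f, by simp [hf, hv'], hef⟩

/-- The data extracted from a partition. -/
structure Part (k : ℕ) (Q : Fin k → Finset E7) : Prop where
  ne : ∀ i, (Q i).Nonempty
  disj : ∀ i j, i ≠ j → ∀ e ∈ Q i, e ∉ Q j
  mem : ∀ e : E7, ¬ e.IsDiag → ∃ i, e ∈ Q i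
  nd : ∀ i, ∀ e ∈ Q i, ¬ e.IsDiag
  cyc : ∀ i j, i ≠ j → ∃ C : Finset E7, C ⊆ Q i ∪ Q j ∧ NoLeaf C ∧ ∃ e ∈ C, e ∈ Q i

variable {k : ℕ} {Q : Fin k → Finset E7}

lemma sum_filter (h : Part k Q) (p : E7 → Prop) [DecidablePred p] :
    ∑ i, ((Q i).filter p).card = ((Finset.univ.filter (fun e : E7 => ¬ e.IsDiag)).filter p).card := by
  rw [← Finset.card_biUnion]
  · congr 1
    ext e
    simp only [Finset.mem_biUnion, Finset.mem_filter, Finset.mem_univ, true_and]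
    constructor
    · rintro ⟨i, hi, hp⟩
      exact ⟨h.nd i e hi, hp⟩
    · rintro ⟨h1, h2⟩
      obtain ⟨i, hi⟩ := h.mem e h1
      exact ⟨i, hi, h2⟩
  · intro i _ j _ hij
    refine Finset.disjoint_left.mpr ?_
    intro e he hf
    exact h.disj i j hij e (Finset.mem_filter.mp he).1 (Finset.mem_filter.mp hf).1

lemma sum_deg (h : Part k Q) (v : Fin 7) : ∑ i, deg (Q i) v = 6 := by
  unfold deg
  rw [sum_filter h]
  revert v
  decide

lemma sum_card (h : Part k Q) : ∑ i, (Q i).card = 21 := by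
  have := sum_filter h (fun _ => True)
  simp only [Finset.filter_true] at this
  rw [this]
  decide

lemma two_le_card (h : Part k Q) (hk : 8 ≤ k) (i : Fin k) : 2 ≤ (Q i).card := by
  by_contra hcon
  have h1 : (Q i).card = 1 := by
    have := Finset.card_pos.mpr (h.ne i)
    omega
  obtain ⟨e, he⟩ := Finset.card_eq_one.mp h1
  induction e using Sym2.ind with | _ u v =>
  have hd : ∀ j, 1 ≤ deg (Q j) u := by
    intro j
    by_cases hj : i = j
    · subst hj
      exact deg_pos (e := s(u, v)) (by simp [he]) (by simp)
    · obtain ⟨C, hC, hn, f, hf, hfi⟩ := h.cyc i j hj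
      rw [he, Finset.mem_singleton] at hfi
      subst hfi
      obtain ⟨g, hg, hgne, hug⟩ := hn _ hf u (by simp)
      have := hC hg
      rw [he] at this
      simp [hgne] at this
      exact deg_pos this hug
  have := sum_deg h u
  have h2 : ∑ i : Fin k, 1 ≤ ∑ i, deg (Q i) u := Finset.sum_le_sum (fun j _ => hd j)
  simp at h2
  omega

lemma three_twos (h : Part k Q) (hk : 8 ≤ k) :
    3 * k ≤ 21 + (Finset.univ.filter (fun i => (Q i).card = 2)).card := by
  have h1 : ∀ i ∈ (Finset.univ : Finset (Fin k)), 3 ≤ (Q i).card + (if (Q i).card = 2 then 1 else 0) := by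
    intro i _
    have := two_le_card h hk i
    split_ifs <;> omega
  have := Finset.sum_le_sum h1
  rw [Finset.sum_add_distrib, sum_card h] at this
  simp at this
  rw [mul_comm]
  simpa using this

/-- The cycle through a path class meets the other class at two of the three path vertices. -/
lemma path_touch {A B C : Finset E7} {a b c : Fin 7} (hab : a ≠ b) (hbc : b ≠ c) (hac : a ≠ c)
    (hA : A = {s(a, b), s(b, c)}) (hC : C ⊆ A ∪ B) (hn : NoLeaf C) (hi : ∃ e ∈ C, e ∈ A) :
    ∃ x y, x ≠ y ∧ (x = a ∨ x = b ∨ x = c) ∧ (y = a ∨ y = b ∨ y = c) ∧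
      (∃ e ∈ C, e ∈ B ∧ x ∈ e) ∧ (∃ e ∈ C, e ∈ B ∧ y ∈ e) := by
  have key : ∀ g ∈ C, g ≠ s(a, b) → g ≠ s(b, c) → g ∈ B := by
    intro g hg h1 h2
    have := hC hg
    rw [hA] at this
    simpa [h1, h2] using this
  have hne : s(a, b) ≠ s(b, c) := by simp; grind
  have endA : s(a, b) ∈ C → ∃ e ∈ C, e ∈ B ∧ a ∈ e := by
    intro h1
    obtain ⟨g, hg, hgn, hag⟩ := hn _ h1 a (by simp)
    refine ⟨g, hg, key g hg hgn ?_, hag⟩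
    rintro rfl
    simp at hag; grind
  have endC : s(b, c) ∈ C → ∃ e ∈ C, e ∈ B ∧ c ∈ e := by
    intro h1
    obtain ⟨g, hg, hgn, hag⟩ := hn _ h1 c (by simp)
    refine ⟨g, hg, key g hg ?_ hgn, hag⟩
    rintro rfl
    simp at hag; grind
  by_cases h1 : s(a, b) ∈ C
  · by_cases h2 : s(b, c) ∈ C
    · exact ⟨a, c, hac, by simp, by simp, endA h1, endC h2⟩
    · obtain ⟨g, hg, hgn, hag⟩ := hn _ h1 b (by simp)
      exact ⟨a, b, hab, by simp, by simp, endA h1, g, hg, key g hg hgn (by rintro rfl; exact h2 hg), hag⟩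
  · have h2 : s(b, c) ∈ C := by
      obtain ⟨e, he, heA⟩ := hi
      rw [hA] at heA
      simp at heA
      rcases heA with rfl | rfl
      · exact absurd he h1
      · exact he
    obtain ⟨g, hg, hgn, hag⟩ := hn _ h2 b (by simp)
    exact ⟨b, c, hbc, by simp, by simp, ⟨g, hg, key g hg (by rintro rfl; exact h1 hg) hgn, hag⟩, endC h2⟩

lemma path_deg_eq {a b c : Fin 7} (hab : a ≠ b) (hbc : b ≠ c) (hac : a ≠ c) (v : Fin 7) :
    deg {s(a, b), s(b, c)} v = if v = b then 2 else if v = a ∨ v = c then 1 else 0 := by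
  have hne : s(a, b) ≠ s(b, c) := by simp; grind
  unfold deg
  rw [Finset.filter_insert, Finset.filter_singleton]
  simp only [Sym2.mem_iff]
  by_cases h1 : v = b
  · subst h1; simp [hne]
  · by_cases h2 : v = a
    · subst h2; simp [hab, hac]
    · by_cases h3 : v = c
      · subst h3; simp [h1, h2]
      · simp [h1, h2, h3]

lemma path_two_le (h : Part k Q) {i j : Fin k} (hij : i ≠ j) {a b c : Fin 7}
    (hab : a ≠ b) (hbc : b ≠ c) (hac : a ≠ c) (hi : Q i = {s(a, b), s(b, c)}) :
    2 ≤ deg (Q j) a + deg (Q j) b + deg (Q j) c := by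
  obtain ⟨C, hC, hn, hi'⟩ := h.cyc i j hij
  obtain ⟨x, y, hxy, hx, hy, ⟨e, -, he, hxe⟩, ⟨f, -, hf, hyf⟩⟩ := path_touch hab hbc hac hi hC hn hi'
  have h1 := deg_pos he hxe
  have h2 := deg_pos hf hyf
  rcases hx with rfl | rfl | rfl <;> rcases hy with rfl | rfl | rfl <;> first | omega | exact absurd rfl hxy

lemma path_tight (h : Part k Q) (hk : 8 ≤ k) {i : Fin k} {a b c : Fin 7}
    (hab : a ≠ b) (hbc : b ≠ c) (hac : a ≠ c) (hi : Q i = {s(a, b), s(b, c)}) :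
    ∀ j, j ≠ i → deg (Q j) a + deg (Q j) b + deg (Q j) c = 2 := by
  have hs : ∑ j, (deg (Q j) a + deg (Q j) b + deg (Q j) c) = 18 := by
    rw [Finset.sum_add_distrib, Finset.sum_add_distrib, sum_deg h, sum_deg h, sum_deg h]
  have h4 : deg (Q i) a + deg (Q i) b + deg (Q i) c = 4 := by
    rw [hi, path_deg_eq hab hbc hac, path_deg_eq hab hbc hac, path_deg_eq hab hbc hac]
    simp [hab, hbc.symm]
  intro j hj
  by_contra hcon
  have h3 : 2 ≤ deg (Q j) a + deg (Q j) b + deg (Q j) c := path_two_le h hj.symm hab hbc hac hi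
  rw [← Finset.add_sum_erase _ _ (Finset.mem_univ i), h4,
    ← Finset.add_sum_erase _ _ (show j ∈ Finset.univ.erase i by simp [hj])] at hs
  have h5 : ∑ l ∈ (Finset.univ.erase i).erase j, 2 ≤
      ∑ l ∈ (Finset.univ.erase i).erase j, (deg (Q l) a + deg (Q l) b + deg (Q l) c) := by
    apply Finset.sum_le_sum
    intro l hl
    simp at hl
    exact path_two_le h (Ne.symm hl.2) hab hbc hac hi
  have h6 : ((Finset.univ.erase i).erase j).card = k - 1 - 1 := by
    rw [Finset.card_erase_of_mem (by simp [hj]), Finset.card_erase_of_mem (by simp)]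
    simp
  simp only [Finset.sum_const, h6, smul_eq_mul] at h5
  omega

/-- Two path classes with the same ends are impossible. -/
lemma no_twin (h : Part k Q) (hk : 8 ≤ k) {i j : Fin k} (hij : i ≠ j) {a b c u : Fin 7}
    (hab : a ≠ b) (hbc : b ≠ c) (hac : a ≠ c) (hua : u ≠ a) (hub : u ≠ b) (huc : u ≠ c)
    (hi : Q i = {s(a, b), s(b, c)}) (hj : Q j = {s(a, u), s(u, c)}) : False := by
  obtain ⟨l, hl⟩ := h.mem s(b, u) (by simpa using hub.symm)
  have hli : l ≠ i := by
    rintro rfl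
    rw [hi] at hl
    simp at hl; grind
  have hlj : l ≠ j := by
    rintro rfl
    rw [hj] at hl
    simp at hl; grind
  have t1 := path_tight h hk hab hbc hac hi l hli
  have t2 := path_tight h hk hua.symm huc hac hj l hlj
  have db := deg_pos hl (show b ∈ s(b, u) by simp)
  have du := deg_pos hl (show u ∈ s(b, u) by simp)
  obtain ⟨C, hC, hn, hi'⟩ := h.cyc i l hli.symm
  obtain ⟨x, y, hxy, hx, hy, ⟨e, heC, he, hxe⟩, ⟨f, hfC, hf, hyf⟩⟩ := path_touch hab hbc hac hi hC hn hi'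
  have hx1 := deg_pos he hxe
  have hy1 := deg_pos hf hyf
  have hb1 : ∀ g ∈ C, g ∈ Q l → b ∈ g → deg (Q l) b = 1 → deg (Q l) u ≥ 2 := by
    intro g hgC hg hbg h1
    have hgu : g = s(b, u) := by
      by_contra hne
      have := deg_two hg hbg hl (by simp) hne
      omega
    subst hgu
    obtain ⟨g', hg', hne, hu'⟩ := hn _ hgC u (by simp)
    have h3 := hC hg'
    have h4 : g' ∈ Q l := by
      rw [hi] at h3
      simp only [Finset.mem_union, Finset.mem_insert, Finset.mem_singleton] at h3
      rcases h3 with (rfl | rfl) | h3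
      · simp at hu'; grind
      · simp at hu'; grind
      · exact h3
    exact deg_two h4 hu' hl (by simp) hne
  rcases hx with rfl | rfl | rfl <;> rcases hy with rfl | rfl | rfl <;>
    first
    | exact absurd rfl hxy
    | omega
    | (have := hb1 e heC he hxe (by omega); omega)
    | (have := hb1 f hfC hf hyf (by omega); omega)

/-- A 2-class with no edge inside the path triangle is itself a path on two path vertices. -/
lemma second_path (h : Part k Q) (hk : 8 ≤ k) {i j : Fin k} (hij : i ≠ j) {a b c : Fin 7}
    (hab : a ≠ b) (hbc : b ≠ c) (hac : a ≠ c)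
    (hi : Q i = {s(a, b), s(b, c)}) (hj : (Q j).card = 2) (hacj : s(a, c) ∉ Q j) : False := by
  have t := path_tight h hk hab hbc hac hi j hij.symm
  obtain ⟨C, hC, hn, hi'⟩ := h.cyc i j hij
  obtain ⟨x, y, hxy, hx, hy, ⟨e, heC, he, hxe⟩, ⟨f, hfC, hf, hyf⟩⟩ := path_touch hab hbc hac hi hC hn hi'
  have nin : ∀ p q, (p = a ∨ p = b ∨ p = c) → (q = a ∨ q = b ∨ q = c) → s(p, q) ∈ Q j → False := by
    intro p q hp hq hpq
    have hnd := h.nd j _ hpq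
    have h1 : s(a, b) ∉ Q j := h.disj i j hij _ (by simp [hi])
    have h2 : s(b, c) ∉ Q j := h.disj i j hij _ (by simp [hi])
    have h3 : s(b, a) ∉ Q j := by rwa [Sym2.eq_swap]
    have h4 : s(c, b) ∉ Q j := by rwa [Sym2.eq_swap]
    have h5 : s(c, a) ∉ Q j := by rwa [Sym2.eq_swap]
    rcases hp with rfl | rfl | rfl <;> rcases hq with rfl | rfl | rfl <;> first | contradiction | (simp at hnd)
  obtain ⟨u, rfl⟩ := hxe
  obtain ⟨v, rfl⟩ := hyf
  have hu : ¬ (u = a ∨ u = b ∨ u = c) := fun hu => nin x u hx hu he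
  have hef : s(x, u) ≠ s(y, v) := by
    intro heq
    simp at heq
    grind
  have hQ : Q j = {s(x, u), s(y, v)} := by
    symm
    apply Finset.eq_of_subset_of_card_le
    · intro g hg; simp at hg; rcases hg with rfl | rfl <;> assumption
    · rw [hj, Finset.card_pair hef]
  have huv : u = v := by
    obtain ⟨g, hg, hgn, hug⟩ := hn _ heC u (by simp)
    have := hC hg
    rw [hi, hQ] at this
    simp only [Finset.mem_union, Finset.mem_insert, Finset.mem_singleton] at this
    rcases this with (rfl | rfl) | rfl | rfl
    · simp at hug; grind
    · simp at hug; grind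
    · exact absurd rfl hgn
    · simp at hug; grind
  subst huv
  have hQ' : Q j = {s(x, u), s(u, y)} := by rw [hQ, Sym2.eq_swap (a := y)]
  have hux : x ≠ u := by rintro rfl; exact hu hx
  have huy : u ≠ y := by rintro rfl; exact hu hy
  have t2 := path_tight h hk hux huy hxy hQ' i hij
  push Not at hu
  rw [hi, path_deg_eq hab hbc hac, path_deg_eq hab hbc hac, path_deg_eq hab hbc hac] at t2
  have hQ'' : Q j = {s(y, u), s(u, x)} := by
    rw [hQ', Finset.pair_comm, Sym2.eq_swap (a := u), Sym2.eq_swap (a := x)]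
  rcases hx with rfl | rfl | rfl <;> rcases hy with rfl | rfl | rfl <;>
    first
    | exact absurd rfl hxy
    | exact no_twin h hk hij hab hbc hac hu.1 hu.2.1 hu.2.2 hi hQ'
    | exact no_twin h hk hij hab hbc hac hu.1 hu.2.1 hu.2.2 hi hQ''
    | (exfalso; revert t2; simp_all; done)
    | (exfalso; revert t2; split_ifs <;> grind)

lemma no_path (h : Part k Q) (hk : 8 ≤ k) {i : Fin k} {a b c : Fin 7}
    (hab : a ≠ b) (hbc : b ≠ c) (hac : a ≠ c)
    (hi : Q i = {s(a, b), s(b, c)}) : False := by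
  have h3 := three_twos h hk
  have : 2 < (Finset.univ.filter (fun i => (Q i).card = 2)).card := by omega
  obtain ⟨l, hl⟩ := h.mem s(a, c) (by simpa using hac)
  obtain ⟨j, hj, hj'⟩ := Finset.exists_mem_notMem_of_card_lt_card
    (s := {i, l}) (t := Finset.univ.filter (fun i => (Q i).card = 2))
    (lt_of_le_of_lt Finset.card_le_two this)
  simp at hj hj'
  exact second_path h hk (Ne.symm hj'.1) hab hbc hac hi hj (h.disj l j (Ne.symm hj'.2) _ hl)

/-- every 2-class is a matching -/
lemma two_matching (h : Part k Q) (hk : 8 ≤ k) {i : Fin k} (hi : (Q i).card = 2) :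
    ∃ a b c d : Fin 7, [a, b, c, d].Nodup ∧ Q i = {s(a, b), s(c, d)} := by
  obtain ⟨e, f, hef, hQ⟩ := Finset.card_eq_two.mp hi
  induction e using Sym2.ind with | _ a b =>
  induction f using Sym2.ind with | _ c d =>
  have hab : a ≠ b := by simpa using h.nd i s(a, b) (by simp [hQ])
  have hcd : c ≠ d := by simpa using h.nd i s(c, d) (by simp [hQ])
  have hQ1 : Q i = {s(b, a), s(c, d)} := by rw [hQ, Sym2.eq_swap]
  have hQ2 : Q i = {s(a, b), s(d, c)} := by rw [hQ, Sym2.eq_swap (a := c)]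
  have hQ3 : Q i = {s(b, a), s(d, c)} := by rw [hQ1, Sym2.eq_swap (a := c)]
  refine ⟨a, b, c, d, ?_, hQ⟩
  by_contra hcon
  have hor : a = c ∨ a = d ∨ b = c ∨ b = d := by
    simp at hcon; grind
  rcases hor with rfl | rfl | rfl | rfl
  · exact no_path h hk hab.symm hcd (by rintro rfl; simp [Sym2.eq_swap] at hef) hQ1
  · exact no_path h hk hab.symm hcd.symm (by rintro rfl; simp at hef) hQ3
  · exact no_path h hk hab hcd (by rintro rfl; simp [Sym2.eq_swap] at hef) hQ
  · exact no_path h hk hab hcd.symm (by rintro rfl; simp at hef) hQ2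

/-- A class other than the matching touches both ends of one matching edge. -/
lemma match_touch (h : Part k Q) {i j : Fin k} (hij : i ≠ j) {a b c d : Fin 7}
    (hnd : [a, b, c, d].Nodup) (hi : Q i = {s(a, b), s(c, d)}) :
    (1 ≤ deg (Q j) a ∧ 1 ≤ deg (Q j) b) ∨ (1 ≤ deg (Q j) c ∧ 1 ≤ deg (Q j) d) := by
  obtain ⟨C, hC, hn, e, heC, he⟩ := h.cyc i j hij
  have key : ∀ v ∈ e, 1 ≤ deg (Q j) v := by
    intro v hv
    obtain ⟨g, hg, hgn, hvg⟩ := hn _ heC v hv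
    have := hC hg
    rw [hi] at this he
    simp only [Finset.mem_union, Finset.mem_insert, Finset.mem_singleton] at this he
    simp at hnd
    rcases this with h1 | h1
    · exfalso
      rcases he with rfl | rfl <;> rcases h1 with rfl | rfl <;> simp at hv hvg hgn <;> grind
    · exact deg_pos h1 hvg
  rw [hi] at he
  simp only [Finset.mem_insert, Finset.mem_singleton] at he
  rcases he with rfl | rfl
  · left; exact ⟨key a (by simp), key b (by simp)⟩
  · right; exact ⟨key c (by simp), key d (by simp)⟩

/-- Two matching classes span the same four vertices. -/
lemma match_same (h : Part k Q) {i j : Fin k} (hij : i ≠ j) {a b c d a' b' c' d' : Fin 7}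
    (hnd : [a, b, c, d].Nodup) (hi : Q i = {s(a, b), s(c, d)})
    (hnd' : [a', b', c', d'].Nodup) (hj : Q j = {s(a', b'), s(c', d')}) :
    ({a, b, c, d} : Finset (Fin 7)) = {a', b', c', d'} := by
  obtain ⟨C, hC, hn, e, heC, he⟩ := h.cyc i j hij
  have mi : ∀ p q r s : Fin 7, [p, q, r, s].Nodup → ∀ m, Q m = {s(p, q), s(r, s)} →
      ∀ g ∈ Q m, ∀ g' ∈ Q m, ∀ v ∈ g, v ∈ g' → g' = g := by
    intro p q r s hpq m hm g hg g' hg' v hv hv'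
    rw [hm] at hg hg'
    simp only [Finset.mem_insert, Finset.mem_singleton] at hg hg'
    simp at hpq
    rcases hg with rfl | rfl <;> rcases hg' with rfl | rfl <;> simp at hv hv' ⊢ <;> grind
  have ui := mi _ _ _ _ hnd i hi
  have uj := mi _ _ _ _ hnd' j hj
  have ij : ∀ g ∈ C, g ∈ Q i → ∀ v ∈ g, ∃ g' ∈ C, g' ∈ Q j ∧ v ∈ g' := by
    intro g hg hgi v hv
    obtain ⟨g', hg', hne, hv'⟩ := hn g hg v hv
    rcases Finset.mem_union.mp (hC hg') with h1 | h1
    · exact absurd (ui g hgi g' h1 v hv hv') hne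
    · exact ⟨g', hg', h1, hv'⟩
  have ji : ∀ g ∈ C, g ∈ Q j → ∀ v ∈ g, ∃ g' ∈ C, g' ∈ Q i ∧ v ∈ g' := by
    intro g hg hgi v hv
    obtain ⟨g', hg', hne, hv'⟩ := hn g hg v hv
    rcases Finset.mem_union.mp (hC hg') with h1 | h1
    · exact ⟨g', hg', h1, hv'⟩
    · exact absurd (uj g hgi g' h1 v hv hv') hne
  have other : ∃ e' ∈ C, e' ∈ Q i ∧ e' ≠ e := by
    by_contra hcon
    push Not at hcon
    induction e using Sym2.ind with | _ p q =>
    obtain ⟨g, hg, hgj, hpg⟩ := ij _ heC he p (by simp)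
    obtain ⟨x, rfl⟩ := hpg
    obtain ⟨g', hg', hgi', hxg'⟩ := ji _ hg hgj x (by simp)
    rw [hcon g' hg' hgi'] at hxg'
    rcases Sym2.mem_iff.mp hxg' with rfl | rfl
    · exact h.nd j _ hgj (by simp)
    · exact h.disj i j hij _ he hgj
  have all : ∀ g ∈ Q i, g ∈ C := by
    obtain ⟨e', he'C, he', hne⟩ := other
    intro g hg
    have : g = e ∨ g = e' := by
      rw [hi] at hg he he'
      simp only [Finset.mem_insert, Finset.mem_singleton] at hg he he'
      grind
    rcases this with rfl | rfl <;> assumption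
  apply Finset.eq_of_subset_of_card_le
  · intro v hv
    have : ∃ g ∈ Q i, v ∈ g := by
      rw [hi]
      simp at hv ⊢
      grind
    obtain ⟨g, hg, hvg⟩ := this
    obtain ⟨g', -, hg'j, hv'⟩ := ij g (all g hg) hg v hvg
    rw [hj] at hg'j
    simp only [Finset.mem_insert, Finset.mem_singleton] at hg'j
    rcases hg'j with rfl | rfl <;> simp at hv' ⊢ <;> grind
  · have h1 : ({a, b, c, d} : Finset (Fin 7)).card = 4 := by
      have := List.toFinset_card_of_nodup hnd; simp only [List.toFinset_cons, List.toFinset_nil, insert_empty_eq] at this; exact this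
    rw [h1]
    exact Finset.card_le_four

/-- Counting touched vertices bounds the degree sum. -/
lemma touch_le (A : Finset E7) (S T : Finset (Fin 7)) (hT : T ⊆ S) (h : ∀ v ∈ T, 1 ≤ deg A v) :
    T.card ≤ ∑ v ∈ S, deg A v := by
  calc T.card = ∑ v ∈ T, 1 := by simp
    _ ≤ ∑ v ∈ T, deg A v := Finset.sum_le_sum h
    _ ≤ _ := Finset.sum_le_sum_of_subset hT

lemma match_deg {A : Finset E7} {a b c d : Fin 7} (hA : A = {s(a, b), s(c, d)}) :
    ∀ v ∈ ({a, b, c, d} : Finset (Fin 7)), 1 ≤ deg A v := by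
  intro v hv
  have : ∃ g ∈ A, v ∈ g := by
    rw [hA]
    simp at hv ⊢
    grind
  obtain ⟨g, hg, hvg⟩ := this
  exact deg_pos hg hvg

lemma pair_union {p q r s : Fin 7} (hpq : p ≠ q) (hne : s(p, q) ≠ s(r, s)) (hrs : r ≠ s) :
    3 ≤ (({p, q} : Finset (Fin 7)) ∪ {r, s}).card := by
  have : (r ≠ p ∧ r ≠ q) ∨ (s ≠ p ∧ s ≠ q) := by
    simp at hne; grind
  have key : ∀ t, t ≠ p ∧ t ≠ q → t ∈ ({r, s} : Finset (Fin 7)) →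
      3 ≤ (({p, q} : Finset (Fin 7)) ∪ {r, s}).card := by
    intro t ht htm
    rw [← Finset.card_eq_three.mpr ⟨p, q, t, hpq, ht.1.symm, ht.2.symm, rfl⟩]
    apply Finset.card_le_card
    intro v hv
    simp at hv htm ⊢
    grind
  rcases this with h1 | h1
  · exact key r h1 (by simp)
  · exact key s h1 (by simp)

lemma contra (h : Part k Q) (hk : 8 ≤ k) : False := by
  have h3 := three_twos h hk
  have : 2 < (Finset.univ.filter (fun i => (Q i).card = 2)).card := by omega
  obtain ⟨i, j, l, hi, hj, hl, hij, hil, hjl⟩ := Finset.two_lt_card_iff.mp this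
  simp only [Finset.mem_filter, Finset.mem_univ, true_and] at hi hj hl
  obtain ⟨a, b, c, d, n1, q1⟩ := two_matching h hk hi
  obtain ⟨a', b', c', d', n2, q2⟩ := two_matching h hk hj
  obtain ⟨a'', b'', c'', d'', n3, q3⟩ := two_matching h hk hl
  have e2 := match_same h hij n1 q1 n2 q2
  have e3 := match_same h hil n1 q1 n3 q3
  set S : Finset (Fin 7) := {a, b, c, d} with hS
  have hScard : S.card = 4 := by
    have := List.toFinset_card_of_nodup n1; simp only [List.toFinset_cons, List.toFinset_nil, insert_empty_eq] at this; exact this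
  have htot : ∑ m, ∑ v ∈ S, deg (Q m) v = 24 := by
    rw [Finset.sum_comm, Finset.sum_congr rfl (fun v _ => sum_deg h v)]
    simp [hScard]
  have f1 : 4 ≤ ∑ v ∈ S, deg (Q i) v := hScard ▸ touch_le _ S S subset_rfl (match_deg q1)
  have f2 : 4 ≤ ∑ v ∈ S, deg (Q j) v :=
    hScard ▸ touch_le _ S S subset_rfl (by rw [e2]; exact match_deg q2)
  have f3 : 4 ≤ ∑ v ∈ S, deg (Q l) v :=
    hScard ▸ touch_le _ S S subset_rfl (by rw [e3]; exact match_deg q3)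
  have fo : ∀ m, m ≠ i → m ≠ j → 3 ≤ ∑ v ∈ S, deg (Q m) v := by
    intro m hmi hmj
    have core : ∀ p q r s, s(p, q) ∈ Q i → s(r, s) ∈ Q j → p ∈ S → q ∈ S → r ∈ S → s ∈ S →
        (1 ≤ deg (Q m) p ∧ 1 ≤ deg (Q m) q) → (1 ≤ deg (Q m) r ∧ 1 ≤ deg (Q m) s) →
        3 ≤ ∑ v ∈ S, deg (Q m) v := by
      intro p q r s hpq hrs hp hq hr hs h1 h2
      refine (pair_union (p := p) (q := q) (r := r) (s := s) ?_ ?_ ?_).trans (touch_le _ _ _ ?_ ?_)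
      · simpa using h.nd i _ hpq
      · intro heq
        exact h.disj i j hij _ hpq (heq ▸ hrs)
      · simpa using h.nd j _ hrs
      · intro v hv
        simp only [Finset.mem_union, Finset.mem_insert, Finset.mem_singleton] at hv
        rcases hv with (rfl | rfl) | rfl | rfl <;> assumption
      · intro v hv
        simp only [Finset.mem_union, Finset.mem_insert, Finset.mem_singleton] at hv
        rcases hv with (rfl | rfl) | rfl | rfl
        exacts [h1.1, h1.2, h2.1, h2.2]
    rcases match_touch h (Ne.symm hmi) n1 q1 with t1 | t1 <;>
      rcases match_touch h (Ne.symm hmj) n2 q2 with t2 | t2 <;>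
      refine core _ _ _ _ ?_ ?_ ?_ ?_ ?_ ?_ t1 t2 <;>
      first | (simp [q1]; done) | (simp [q2]; done) | (simp [hS]; done) | (rw [e2]; simp; done)
  have hle : ∀ m ∈ (Finset.univ : Finset (Fin k)),
      3 + (if m ∈ ({i, j, l} : Finset (Fin k)) then 1 else 0) ≤ ∑ v ∈ S, deg (Q m) v := by
    intro m _
    by_cases hmi : m = i
    · subst hmi; simpa using f1
    by_cases hmj : m = j
    · subst hmj; simpa using f2
    by_cases hml : m = l
    · subst hml; simpa using f3
    simpa [hmi, hmj, hml] using fo m hmi hmj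
  have hsum := Finset.sum_le_sum hle
  have h3c : ({i, j, l} : Finset (Fin k)).card = 3 :=
    Finset.card_eq_three.mpr ⟨i, j, l, hij, hil, hjl, rfl⟩
  rw [htot, Finset.sum_add_distrib, Finset.sum_ite_mem, Finset.univ_inter] at hsum
  simp only [Finset.sum_const, h3c, Finset.card_univ, Fintype.card_fin, smul_eq_mul] at hsum
  omega

end K7Arb

open K7Arb in
lemma upper_K7 {k : ℕ} (hk : 8 ≤ k) (P : Fin k → Set (Sym2 (Fin 7)))
    (hP : IsCompleteForestPartition (⊤ : SimpleGraph (Fin 7)) k P) : False := by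
  classical
  obtain ⟨h1, h2, h3, h4, h5⟩ := hP
  have hc : ∀ i, (((P i).toFinset : Finset E7) : Set E7) = P i := by intro i; simp
  have hd : ∀ i, ∀ e ∈ P i, ¬ e.IsDiag := by
    intro i e he
    have : e ∈ (⊤ : SimpleGraph (Fin 7)).edgeSet := by rw [← h3]; exact Set.mem_iUnion.mpr ⟨i, he⟩
    exact SimpleGraph.not_isDiag_of_mem_edgeSet _ this
  refine contra (k := k) (Q := fun i => (P i).toFinset) ⟨?_, ?_, ?_, ?_, ?_⟩ hk
  · intro i; simpa using h1 i
  · intro i j hij e he hf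
    simp at he hf
    exact Set.disjoint_left.mp (h2 i j hij) he hf
  · intro e he
    have : e ∈ (⊤ : SimpleGraph (Fin 7)).edgeSet := by
      induction e using Sym2.ind with | _ x y => simpa using he
    rw [← h3] at this
    simpa using this
  · intro i e he
    simp at he
    exact hd i e he
  · intro i j hij
    obtain ⟨C, hC, hn, e, he, heA⟩ := exists_cyc (A := (P j).toFinset) (B := (P i).toFinset)
      (by rw [hc]; exact h4 j) (by rw [hc, hc]; exact h5 j i hij.symm)
    refine ⟨C, by rwa [Finset.union_comm], hn, e, he, ?_⟩
    have := hC he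
    simp only [Finset.mem_union, heA, false_or] at this
    exact this

/-- The stars `i → i+1, i+2, i+4`. -/
def starK7 (i : Fin 7) : Finset (Sym2 (Fin 7)) := {s(i, i + 1), s(i, i + 2), s(i, i + 4)}

open K7Arb in
lemma starK7_partition :
    IsCompleteForestPartition (⊤ : SimpleGraph (Fin 7)) 7 (fun i => (starK7 i : Set (Sym2 (Fin 7)))) := by
  refine ⟨?_, ?_, ?_, ?_, ?_⟩
  · intro i; exact ⟨s(i, i + 1), by simp [starK7]⟩
  · intro i j hij
    rw [Finset.disjoint_coe]
    revert i j; decide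
  · ext e
    simp only [Set.mem_iUnion, Finset.mem_coe]
    have : ∀ x y : Fin 7, (∃ i, s(x, y) ∈ starK7 i) ↔ x ≠ y := by decide
    induction e using Sym2.ind with | _ x y =>
    rw [this]; simp
  · intro i u p hp
    have hn := noLeaf_of_cycle p hp
    have hsub : ∀ e ∈ p.edges.toFinset, e ∈ starK7 i := by
      intro e he
      have := p.edges_subset_edgeSet (by simpa using he)
      simp only [SimpleGraph.edgeSet_fromEdgeSet] at this
      simpa using this.1
    have hleaf : ∀ i : Fin 7, ∀ e ∈ starK7 i, ∃ v ∈ e, ∀ f ∈ starK7 i, v ∈ f → f = e := by decide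
    obtain ⟨e, he⟩ : ∃ e, e ∈ p.edges := by
      apply List.exists_mem_of_ne_nil
      intro h0
      have := hp.three_le_length
      rw [← SimpleGraph.Walk.length_edges, h0] at this
      simp at this
    obtain ⟨v, hv, hu⟩ := hleaf i e (hsub e (by simpa using he))
    obtain ⟨f, hf, hne, hvf⟩ := hn e (by simpa using he) v hv
    exact hne (hu f (hsub f hf) hvf)
  · intro i j hij hac
    have htri : ∀ i j : Fin 7, i ≠ j → ∃ r, r ≠ i ∧ r ≠ j ∧ s(i, j) ∈ starK7 i ∪ starK7 j ∧
        s(j, r) ∈ starK7 i ∪ starK7 j ∧ s(r, i) ∈ starK7 i ∪ starK7 j := by decide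
    obtain ⟨r, hri, hrj, h1, h2, h3⟩ := htri i j hij
    rw [← Finset.coe_union] at hac
    set G := SimpleGraph.fromEdgeSet ((starK7 i ∪ starK7 j : Finset (Sym2 (Fin 7))) : Set (Sym2 (Fin 7)))
    have a1 : G.Adj i j := by simp only [G, SimpleGraph.fromEdgeSet_adj]; exact ⟨h1, hij⟩
    have a2 : G.Adj j r := by simp only [G, SimpleGraph.fromEdgeSet_adj]; exact ⟨h2, hrj.symm⟩
    have a3 : G.Adj r i := by simp only [G, SimpleGraph.fromEdgeSet_adj]; exact ⟨h3, hri⟩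
    apply hac (.cons a1 (.cons a2 (.cons a3 .nil)))
    rw [SimpleGraph.Walk.cons_isCycle_iff]
    simp
    grind

/-- The achromatic arboricity of `K_7` equals `7`. -/
theorem achromaticArboricity_K7 :
    achromaticArboricity (⊤ : SimpleGraph (Fin 7)) = 7 := by
  apply IsGreatest.csSup_eq
  refine ⟨⟨_, starK7_partition⟩, ?_⟩
  rintro k ⟨P, hP⟩
  by_contra hk
  exact upper_K7 (by omega) P hP
end
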